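/- arXiv:2011.03434 — 4 statements merged into one kernel-verified Lean document; each statement's English description precedes it below -/
import Mathlib

section
/- Let M be a popular max-matching in G and let U be the set of nodes unmatched in M. Let U_A = U ∩ A, U_B = U ∩ B, A' = A ∖ U, B' = B ∖ U, n0 = |A'| = |B'|, and let E' be the set of edges of E with both endpoints matched in M; for T ⊆ A ∪ B let Nbr(T) denote the set of neighbors in G of nodes in T (note Nbr(U_B) ⊆ A' and Nbr(U_A) ⊆ B' since M is maximum). Then there exists α : A' ∪ B' → ℤ such that: (a) α_a + α_b ≥ wt_M(a,b) for every edge (a,b) ∈ E'; (b) α_a + α_b = 0 for every edge (a,b) ∈ M; (c) α_a ∈ {0, −2, …, −2(n0−1)} for every a ∈ A' and α_b ∈ {0, 2, …, 2(n0−1)} for every b ∈ B'; (i) α_a = 0 for every a ∈ Nbr(U_B); and (ii) α_b = 2(n0−1) for every b ∈ Nbr(U_A). -/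
open Classical

noncomputable section

namespace PopMax

/-- A bipartite preference instance `G = (A ∪ B, E)`:
`E a b` says there is an edge between `a ∈ A` and `b ∈ B`;
`prefA a b b'` says `a` strictly prefers `b` to `b'`;
`prefB b a a'` says `b` strictly prefers `a` to `a'`. -/
structure PrefSys (A : Type*) (B : Type*) where
  E : A → B → Prop
  prefA : A → B → B → Prop
  prefB : B → A → A → Prop

/-- Every node has a strict (linear) preference order over its neighbors. -/
def PrefSys.IsValid {A B : Type*} (I : PrefSys A B) : Prop :=
  (∀ a b, ¬ I.prefA a b b) ∧
  (∀ a b₁ b₂ b₃, I.prefA a b₁ b₂ → I.prefA a b₂ b₃ → I.prefA a b₁ b₃) ∧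
  (∀ a b₁ b₂, I.E a b₁ → I.E a b₂ → b₁ ≠ b₂ → I.prefA a b₁ b₂ ∨ I.prefA a b₂ b₁) ∧
  (∀ b a, ¬ I.prefB b a a) ∧
  (∀ b a₁ a₂ a₃, I.prefB b a₁ a₂ → I.prefB b a₂ a₃ → I.prefB b a₁ a₃) ∧
  (∀ b a₁ a₂, I.E a₁ b → I.E a₂ b → a₁ ≠ a₂ → I.prefB b a₁ a₂ ∨ I.prefB b a₂ a₁)

variable {A B : Type*}

/-- A matching: a set of pairwise disjoint edges. -/
def IsMatching (I : PrefSys A B) (M : Finset (A × B)) : Prop :=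
  (∀ p ∈ M, I.E p.1 p.2) ∧
  (∀ p ∈ M, ∀ q ∈ M, p.1 = q.1 → p = q) ∧
  (∀ p ∈ M, ∀ q ∈ M, p.2 = q.2 → p = q)

def matchedA (M : Finset (A × B)) (a : A) : Prop := ∃ b, (a, b) ∈ M
def matchedB (M : Finset (A × B)) (b : B) : Prop := ∃ a, (a, b) ∈ M

/-- A maximum matching: a matching of maximum cardinality. -/
def IsMaximumMatching (I : PrefSys A B) (M : Finset (A × B)) : Prop :=
  IsMatching I M ∧ ∀ N : Finset (A × B), IsMatching I N → N.card ≤ M.card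

/-- A perfect matching matches all nodes. -/
def IsPerfectMatching (I : PrefSys A B) (M : Finset (A × B)) : Prop :=
  IsMatching I M ∧ (∀ a, matchedA M a) ∧ (∀ b, matchedB M b)

/-- `a ∈ A` prefers matching `M` to matching `N`. -/
def prefersA (I : PrefSys A B) (a : A) (M N : Finset (A × B)) : Prop :=
  ∃ b, (a, b) ∈ M ∧ (¬ matchedA N a ∨ ∃ b', (a, b') ∈ N ∧ I.prefA a b b')

/-- `b ∈ B` prefers matching `M` to matching `N`. -/
def prefersB (I : PrefSys A B) (b : B) (M N : Finset (A × B)) : Prop :=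
  ∃ a, (a, b) ∈ M ∧ (¬ matchedB N b ∨ ∃ a', (a', b) ∈ N ∧ I.prefB b a a')

/-- A node `u ∈ A ∪ B` prefers matching `M` to matching `N`. -/
def prefers (I : PrefSys A B) (u : A ⊕ B) (M N : Finset (A × B)) : Prop :=
  match u with
  | Sum.inl a => prefersA I a M N
  | Sum.inr b => prefersB I b M N

/-- `φ(M,N)`: the number of nodes preferring `M` to `N`. -/
def phi [Fintype A] [Fintype B] (I : PrefSys A B) (M N : Finset (A × B)) : ℕ :=
  (Finset.univ.filter (fun u : A ⊕ B => prefers I u M N)).card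

/-- `Δ(M,N) = φ(M,N) − φ(N,M)`. -/
def Delta [Fintype A] [Fintype B] (I : PrefSys A B) (M N : Finset (A × B)) : ℤ :=
  (phi I M N : ℤ) - (phi I N M : ℤ)

/-- A popular max-matching: a maximum matching `M` with `Δ(M,N) ≥ 0`
for every maximum matching `N`. -/
def IsPopularMaxMatching [Fintype A] [Fintype B] (I : PrefSys A B)
    (M : Finset (A × B)) : Prop :=
  IsMaximumMatching I M ∧
    ∀ N : Finset (A × B), IsMaximumMatching I N → 0 ≤ Delta I M N

/-- The edge `(a,b) ∉ M` blocks `M`. -/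
def Blocks (I : PrefSys A B) (M : Finset (A × B)) (a : A) (b : B) : Prop :=
  I.E a b ∧ (a, b) ∉ M ∧
  (¬ matchedA M a ∨ ∃ b', (a, b') ∈ M ∧ I.prefA a b b') ∧
  (¬ matchedB M b ∨ ∃ a', (a', b) ∈ M ∧ I.prefB b a a')

/-- A stable matching: a matching with no blocking edge. -/
def IsStable (I : PrefSys A B) (S : Finset (A × B)) : Prop :=
  IsMatching I S ∧ ∀ a b, ¬ Blocks I S a b

/-- The edge weight `wt_M(a,b) ∈ {0, ±2}`. -/
def wt (I : PrefSys A B) (M : Finset (A × B)) (a : A) (b : B) : ℤ :=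
  if Blocks I M a b then 2
  else if (∃ b', (a, b') ∈ M ∧ I.prefA a b' b) ∧ (∃ a', (a', b) ∈ M ∧ I.prefB b a' a) then -2
  else 0

/-- The underlying simple graph on the node set `A ⊕ B`. -/
def graphOf (I : PrefSys A B) : SimpleGraph (A ⊕ B) :=
  SimpleGraph.fromRel (fun u w =>
    match u, w with
    | Sum.inl a, Sum.inr b => I.E a b
    | _, _ => False)

/-- The (undirected) edge `e` is an edge of the matching `M`. -/
def edgeInM (M : Finset (A × B)) (e : Sym2 (A ⊕ B)) : Prop :=
  ∃ a b, (a, b) ∈ M ∧ e = s(Sum.inl a, Sum.inr b)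

/-- Consecutive edges alternate between `M` and `E ∖ M`. -/
def altRel (M : Finset (A × B)) (e f : Sym2 (A ⊕ B)) : Prop :=
  edgeInM M e ↔ ¬ edgeInM M f

/-- An alternating path with respect to `M`. -/
def IsAltPath (I : PrefSys A B) (M : Finset (A × B)) {u w : A ⊕ B}
    (p : (graphOf I).Walk u w) : Prop :=
  p.IsPath ∧ List.Chain' (altRel M) p.edges

/-- An alternating cycle with respect to `M` (alternation also across the wrap-around). -/
def IsAltCycle (I : PrefSys A B) (M : Finset (A × B)) {w : A ⊕ B}
    (c : (graphOf I).Walk w w) : Prop :=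
  c.IsCycle ∧ List.Chain' (altRel M) (c.edges ++ c.edges.take 1)

/-- `wt_M` as a function on undirected edges. -/
def wtSym (I : PrefSys A B) (M : Finset (A × B)) : Sym2 (A ⊕ B) → ℤ :=
  Sym2.lift ⟨fun u w =>
      match u, w with
      | Sum.inl a, Sum.inr b => wt I M a b
      | Sum.inr b, Sum.inl a => wt I M a b
      | _, _ => 0,
    by rintro (a | b) (a' | b') <;> rfl⟩

/-- `wt_M(ρ) = Σ_{e ∈ ρ} wt_M(e)` for a walk `ρ`. -/
def wtWalk (I : PrefSys A B) (M : Finset (A × B)) {u w : A ⊕ B}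
    (p : (graphOf I).Walk u w) : ℤ :=
  (p.edges.map (wtSym I M)).sum

/-- The node `u ∈ A ∪ B` is unmatched in `M`. -/
def unmatchedNode (M : Finset (A × B)) : A ⊕ B → Prop
  | Sum.inl a => ¬ matchedA M a
  | Sum.inr b => ¬ matchedB M b

/-- The set of edges `(a,b) ∈ A × B` used by the walk `p`. -/
def pairsOf [Fintype A] [Fintype B] (I : PrefSys A B) {u w : A ⊕ B}
    (p : (graphOf I).Walk u w) : Finset (A × B) :=
  Finset.univ.filter (fun ab : A × B => s(Sum.inl ab.1, Sum.inr ab.2) ∈ p.edges)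

/-- `M` is Pareto-optimal: no matching `N` has `φ(N,M) > 0` and `φ(M,N) = 0`. -/
def IsParetoOptimal [Fintype A] [Fintype B] (I : PrefSys A B) (M : Finset (A × B)) : Prop :=
  ¬ ∃ N : Finset (A × B), IsMatching I N ∧ 0 < phi I N M ∧ phi I M N = 0

/-! ### The auxiliary instance `G*` -/

/-- `A* = {a_0, …, a_{n0−1} : a ∈ A}` where `n0 = |A|`. -/
abbrev AStar (A : Type*) [Fintype A] : Type _ := A × Fin (Fintype.card A)

/-- `B* = B̃ ∪ {d_1(a), …, d_{n0−1}(a) : a ∈ A}`; the dummy node `(a, j)`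
(with `j : Fin (n0 − 1)`) stands for `d_{j+1}(a)`. -/
abbrev BStar (A : Type*) (B : Type*) [Fintype A] : Type _ :=
  B ⊕ (A × Fin (Fintype.card A - 1))

/-- The auxiliary instance `G*` with its edges and preferences. -/
def starSys [Fintype A] (I : PrefSys A B) : PrefSys (AStar A) (BStar A B) where
  E := fun ai w =>
    match ai, w with
    | (a, _i), Sum.inl b => I.E a b
    | (a, i), Sum.inr (a', j) => a = a' ∧ ((i : ℕ) = (j : ℕ) ∨ (i : ℕ) = (j : ℕ) + 1)
  prefA := fun ai u v =>
    match ai, u, v with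
    | (a, _i), Sum.inl b, Sum.inl b' => I.prefA a b b'
    | (a, i), Sum.inl _b, Sum.inr (a', j) => a = a' ∧ (j : ℕ) = (i : ℕ)
    | (a, i), Sum.inr (a', j), Sum.inl _b => a = a' ∧ (j : ℕ) + 1 = (i : ℕ)
    | (a, i), Sum.inr (a', j), Sum.inr (a'', j') =>
        a = a' ∧ a = a'' ∧ (j : ℕ) + 1 = (i : ℕ) ∧ (j' : ℕ) = (i : ℕ)
  prefB := fun w x y =>
    match w, x, y with
    | Sum.inl b, (a, i), (a', i') =>
        (i' : ℕ) < (i : ℕ) ∨ ((i : ℕ) = (i' : ℕ) ∧ I.prefB b a a')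
    | Sum.inr (a, j), (a', i), (a'', i') =>
        a' = a ∧ a'' = a ∧ (i : ℕ) = (j : ℕ) ∧ (i' : ℕ) = (j : ℕ) + 1

/-- The projection `S ↦ S'`: delete edges incident to dummy nodes and replace
`(a_i, b̃)` by `(a, b)`. -/
def proj [Fintype A] [Fintype B] (S : Finset (AStar A × BStar A B)) : Finset (A × B) :=
  Finset.univ.filter (fun ab : A × B =>
    ∃ i : Fin (Fintype.card A), ((ab.1, i), (Sum.inl ab.2 : BStar A B)) ∈ S)

/-- `a ∈ A_i` for the level partition of `A` induced by a (stable) matching `S` in `G*`: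
for `i ≤ n0 − 2`, `a ∈ A_i` iff `(a_i, b̃) ∈ S` for some `b̃ ∈ B̃`;
`A_{n0−1}` consists of all remaining nodes of `A`. -/
def AtLevelA [Fintype A] (S : Finset (AStar A × BStar A B)) (a : A) (i : ℕ) : Prop :=
  (i + 1 < Fintype.card A ∧
     ∃ j : Fin (Fintype.card A), (j : ℕ) = i ∧
       ∃ b : B, ((a, j), (Sum.inl b : BStar A B)) ∈ S) ∨
  (i + 1 = Fintype.card A ∧
     ∀ j : Fin (Fintype.card A), (j : ℕ) + 1 < Fintype.card A →
       ∀ b : B, ((a, j), (Sum.inl b : BStar A B)) ∉ S)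

/-- `b ∈ B_i` for the level partition of `B` induced by a (stable) matching `S` in `G*`:
for `1 ≤ i ≤ n0 − 1`, `b ∈ B_i` iff `(a_i, b̃) ∈ S` for some `a ∈ A_i`;
`B_0` consists of all remaining nodes of `B`. -/
def AtLevelB [Fintype A] (S : Finset (AStar A × BStar A B)) (b : B) (i : ℕ) : Prop :=
  (1 ≤ i ∧ i < Fintype.card A ∧
     ∃ j : Fin (Fintype.card A), (j : ℕ) = i ∧
       ∃ a : A, AtLevelA S a i ∧ ((a, j), (Sum.inl b : BStar A B)) ∈ S) ∨
  (i = 0 ∧ ∀ j : Fin (Fintype.card A), 1 ≤ (j : ℕ) →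
       ∀ a : A, AtLevelA S a (j : ℕ) → ((a, j), (Sum.inl b : BStar A B)) ∉ S)


/-! ### Simple paths in a finite digraph -/

def IsP {V : Type*} (R : V → V → Prop) (p : ℕ → V) (k : ℕ) : Prop :=
  (∀ i j, i ≤ k → j ≤ k → p i = p j → i = j) ∧ ∀ i, i < k → R (p i) (p (i + 1))

def PW {V : Type*} (w : V → V → ℤ) (p : ℕ → V) (k : ℕ) : ℤ :=
  ∑ i ∈ Finset.range k, w (p i) (p (i + 1))

lemma IsP.prefix {V : Type*} {R : V → V → Prop} {p : ℕ → V} {k : ℕ} (h : IsP R p k)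
    {i : ℕ} (hi : i ≤ k) : IsP R p i :=
  ⟨fun a b ha hb => h.1 a b (ha.trans hi) (hb.trans hi), fun a ha => h.2 a (ha.trans_le hi)⟩

lemma IsP.shift {V : Type*} {R : V → V → Prop} {p : ℕ → V} {k : ℕ} (h : IsP R p k)
    {i : ℕ} (hi : i ≤ k) : IsP R (fun j => p (i + j)) (k - i) := by
  refine ⟨fun a b ha hb hab => ?_, fun a ha => ?_⟩
  · have := h.1 (i + a) (i + b) (by omega) (by omega) hab
    omega
  · exact h.2 (i + a) (by omega)

lemma PW_split {V : Type*} (w : V → V → ℤ) (p : ℕ → V) {i k : ℕ} (hi : i ≤ k) :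
    PW w p k = PW w p i + PW w (fun j => p (i + j)) (k - i) := by
  obtain ⟨d, rfl⟩ := Nat.exists_eq_add_of_le hi
  unfold PW
  rw [Finset.sum_range_add, Nat.add_sub_cancel_left]
  rfl

lemma IsP.zero {V : Type*} {R : V → V → Prop} (v : V) : IsP R (fun _ => v) 0 :=
  ⟨fun i j hi hj _ => by omega, fun i hi => by omega⟩

lemma IsP.concat {V : Type*} {R : V → V → Prop} (w : V → V → ℤ) {p q : ℕ → V} {k l : ℕ}
    (hp : IsP R p k) (hq : IsP R q l) (hd : ∀ i j, i ≤ k → j ≤ l → p i ≠ q j)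
    (hr : R (p k) (q 0)) :
    ∃ r : ℕ → V, IsP R r (k + 1 + l) ∧ r 0 = p 0 ∧ r (k + 1 + l) = q l ∧
      PW w r (k + 1 + l) = PW w p k + w (p k) (q 0) + PW w q l := by
  have e1 : ∀ i, i ≤ k → (fun i => if i ≤ k then p i else q (i - (k + 1))) i = p i := by
    intro i hi; simp [hi]
  have e2 : ∀ j, (fun i => if i ≤ k then p i else q (i - (k + 1))) (k + 1 + j) = q j := by
    intro j
    have : ¬ (k + 1 + j ≤ k) := by omega
    simp [this]
  generalize (fun i => if i ≤ k then p i else q (i - (k + 1))) = r at e1 e2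
  refine ⟨r, ⟨?_, ?_⟩, e1 0 (by omega), e2 l, ?_⟩
  · intro i j hi hj hij
    rcases Nat.lt_or_ge k i with h1 | h1 <;> rcases Nat.lt_or_ge k j with h2 | h2
    · obtain ⟨a, rfl⟩ := Nat.exists_eq_add_of_le (Nat.succ_le_of_lt h1)
      obtain ⟨b, rfl⟩ := Nat.exists_eq_add_of_le (Nat.succ_le_of_lt h2)
      simp only [Nat.succ_eq_add_one] at *
      rw [e2, e2] at hij
      have := hq.1 a b (by omega) (by omega) hij
      omega
    · obtain ⟨a, rfl⟩ := Nat.exists_eq_add_of_le (Nat.succ_le_of_lt h1)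
      simp only [Nat.succ_eq_add_one] at *
      rw [e2, e1 j h2] at hij
      exact absurd hij.symm (hd j a h2 (by omega))
    · obtain ⟨b, rfl⟩ := Nat.exists_eq_add_of_le (Nat.succ_le_of_lt h2)
      simp only [Nat.succ_eq_add_one] at *
      rw [e2, e1 i h1] at hij
      exact absurd hij (hd i b h1 (by omega))
    · rw [e1 i h1, e1 j h2] at hij
      exact hp.1 i j h1 h2 hij
  · intro i hi
    rcases lt_trichotomy i k with h | h | h
    · rw [e1 i h.le, e1 (i + 1) h]; exact hp.2 i h
    · subst h
      have := e2 0
      rw [e1 i le_rfl, show i + 1 = i + 1 + 0 from rfl, e2 0]; exact hr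
    · obtain ⟨a, rfl⟩ := Nat.exists_eq_add_of_le (Nat.succ_le_of_lt h)
      simp only [Nat.succ_eq_add_one] at *
      rw [e2, show k + 1 + a + 1 = k + 1 + (a + 1) from by omega, e2]
      exact hq.2 a (by omega)
  · unfold PW
    rw [Finset.sum_range_add, Finset.sum_range_succ]
    congr 1
    · congr 1
      · refine Finset.sum_congr rfl fun i hi => ?_
        have hi := Finset.mem_range.1 hi
        rw [e1 i hi.le, e1 (i + 1) hi]
      · rw [e1 k le_rfl, show k + 1 = k + 1 + 0 from rfl, e2 0]
    · refine Finset.sum_congr rfl fun i hi => ?_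
      rw [e2, show k + 1 + i + 1 = k + 1 + (i + 1) from by omega, e2]

lemma IsP.card {V : Type*} [Fintype V] {R : V → V → Prop} {p : ℕ → V} {k : ℕ}
    (h : IsP R p k) : k + 1 ≤ Fintype.card V := by
  have : Function.Injective (fun i : Fin (k + 1) => p i) := by
    intro i j hij
    exact Fin.ext (h.1 i j (by omega) (by omega) hij)
  simpa using Fintype.card_le_of_injective _ this

lemma IsP.bound {V : Type*} [Fintype V] {R : V → V → Prop} {w : V → V → ℤ}
    (hw : ∀ a b, w a b ≤ 1) {p : ℕ → V} {k : ℕ}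
    (h : IsP R p k) : PW w p k ≤ (Fintype.card V : ℤ) - 1 := by
  have h1 := h.card
  have h2 : PW w p k ≤ (k : ℤ) := by
    unfold PW
    calc _ ≤ ∑ i ∈ Finset.range k, (1 : ℤ) := Finset.sum_le_sum fun i _ => hw _ _
      _ = k := by simp
  omega

lemma pot {V : Type*} [Fintype V] (R : V → V → Prop) (w : V → V → ℤ)
    (hw : ∀ a b, w a b ≤ 1) (S T : V → Prop)
    (H1 : ∀ p k, IsP R p k → R (p k) (p 0) → PW w p k + w (p k) (p 0) ≤ 0)
    (H2 : ∀ p k, IsP R p k → S (p 0) → PW w p k ≤ 0)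
    (H3 : ∀ p k, IsP R p k → T (p k) → PW w p k ≤ 0)
    (H4 : ∀ p k, IsP R p k → S (p 0) → ¬ T (p k)) :
    ∃ κ : V → ℤ, (∀ v, 0 ≤ κ v ∧ κ v ≤ (Fintype.card V : ℤ) - 1) ∧
      (∀ a b, R a b → κ a + w a b ≤ κ b) ∧ (∀ v, T v → κ v = 0) ∧
      (∀ v, S v → κ v = (Fintype.card V : ℤ) - 1) := by
  have hh : ∀ v, ∃ z : ℤ, (∃ p k, IsP R p k ∧ p k = v ∧ PW w p k = z) ∧
      ∀ p k, IsP R p k → p k = v → PW w p k ≤ z := by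
    intro v
    obtain ⟨z, hz, hz'⟩ := Int.exists_greatest_of_bdd
      (P := fun z => ∃ p k, IsP R p k ∧ p k = v ∧ PW w p k = z)
      ⟨(Fintype.card V : ℤ) - 1, by rintro z ⟨p, k, hp, -, rfl⟩; exact hp.bound hw⟩
      ⟨0, fun _ => v, 0, IsP.zero v, rfl, by simp [PW]⟩
    exact ⟨z, hz, fun p k hp hk => hz' _ ⟨p, k, hp, hk, rfl⟩⟩
  have hh' : ∀ v, ∃ z : ℤ, (∃ p k, IsP R p k ∧ p 0 = v ∧ PW w p k = z) ∧
      ∀ p k, IsP R p k → p 0 = v → PW w p k ≤ z := by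
    intro v
    obtain ⟨z, hz, hz'⟩ := Int.exists_greatest_of_bdd
      (P := fun z => ∃ p k, IsP R p k ∧ p 0 = v ∧ PW w p k = z)
      ⟨(Fintype.card V : ℤ) - 1, by rintro z ⟨p, k, hp, -, rfl⟩; exact hp.bound hw⟩
      ⟨0, fun _ => v, 0, IsP.zero v, rfl, by simp [PW]⟩
    exact ⟨z, hz, fun p k hp hk => hz' _ ⟨p, k, hp, hk, rfl⟩⟩
  choose h hex hmax using hh
  choose g gex gmax using hh'
  have h0 : ∀ v, 0 ≤ h v := fun v => by
    simpa [PW] using hmax v (fun _ => v) 0 (IsP.zero v) rfl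
  have g0 : ∀ v, 0 ≤ g v := fun v => by
    simpa [PW] using gmax v (fun _ => v) 0 (IsP.zero v) rfl
  have hb : ∀ v, h v ≤ (Fintype.card V : ℤ) - 1 := fun v => by
    obtain ⟨p, k, hp, -, e⟩ := hex v
    rw [← e]; exact hp.bound hw
  have gb : ∀ v, g v ≤ (Fintype.card V : ℤ) - 1 := fun v => by
    obtain ⟨p, k, hp, -, e⟩ := gex v
    rw [← e]; exact hp.bound hw
  have harc : ∀ a b, R a b → h a + w a b ≤ h b := by
    intro a b hab
    obtain ⟨p, k, hp, rfl, e⟩ := hex a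
    rw [← e]
    by_cases hc : ∃ i ≤ k, p i = b
    · obtain ⟨i, hi, rfl⟩ := hc
      have hki : i + (k - i) = k := by omega
      have c1 := H1 _ _ (hp.shift hi) (by simpa [hki] using hab)
      have c2 := hmax (p i) p i (hp.prefix hi) rfl
      simp only [hki, Nat.add_zero] at c1
      rw [PW_split w p hi]
      linarith
    · push Not at hc
      obtain ⟨r, hr, -, r1, r2⟩ := IsP.concat w hp (IsP.zero b) (fun i j hi _ => hc i hi) hab
      have := hmax b r _ hr r1
      rw [r2] at this
      simpa [PW] using this
  have garc : ∀ a b, R a b → w a b + g b ≤ g a := by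
    intro a b hab
    obtain ⟨p, k, hp, rfl, e⟩ := gex b
    rw [← e]
    by_cases hc : ∃ i ≤ k, p i = a
    · obtain ⟨i, hi, rfl⟩ := hc
      have c1 := H1 _ _ (hp.prefix hi) hab
      have c2 := gmax (p i) _ _ (hp.shift hi) rfl
      rw [PW_split w p hi]
      linarith
    · push Not at hc
      obtain ⟨r, hr, r1, -, r2⟩ := IsP.concat w (IsP.zero a) hp
        (fun i j _ hj => (hc j hj).symm) hab
      have := gmax a r _ hr r1
      rw [r2] at this
      simpa [PW] using this
  let Q : V → Prop := fun v => ∃ p k, IsP R p k ∧ S (p 0) ∧ p k = v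
  have Qarc : ∀ a b, R a b → Q a → Q b := by
    rintro a b hab ⟨p, k, hp, hS, rfl⟩
    by_cases hc : ∃ i ≤ k, p i = b
    · obtain ⟨i, hi, rfl⟩ := hc
      exact ⟨p, i, hp.prefix hi, hS, rfl⟩
    · push Not at hc
      obtain ⟨r, hr, r0, r1, r2⟩ := IsP.concat w hp (IsP.zero b) (fun i j hi _ => hc i hi) hab
      exact ⟨r, _, hr, r0 ▸ hS, r1⟩
  have Qpath : ∀ p k, IsP R p k → ∀ i j, i + j ≤ k → Q (p i) → Q (p (i + j)) := by
    intro p k hp i j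
    induction j with
    | zero => intro _ h; exact h
    | succ j ih =>
      intro hj hQ
      exact Qarc _ _ (hp.2 (i + j) (by omega)) (ih (by omega) hQ)
  refine ⟨fun v => if Q v then (Fintype.card V : ℤ) - 1 - g v else h v, ?_, ?_, ?_, ?_⟩
  · intro v
    have := h0 v; have := g0 v; have := hb v; have := gb v
    dsimp only
    split_ifs <;> constructor <;> linarith
  · intro a b hab
    dsimp only
    by_cases ha : Q a
    · have hQb := Qarc a b hab ha
      rw [if_pos ha, if_pos hQb]
      have := garc a b hab
      linarith
    · rw [if_neg ha]
      by_cases hQb : Q b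
      · rw [if_pos hQb]
        obtain ⟨p, k, hp, rfl, e⟩ := hex a
        obtain ⟨q, l, hq, rfl, e'⟩ := gex b
        obtain ⟨r, hr, -, -, r2⟩ := IsP.concat w hp hq (by
          intro i j hi hj hij
          have h1 : Q (q j) := by simpa using Qpath q l hq 0 j (by omega) hQb
          rw [← hij] at h1
          have h2 := Qpath p k hp i (k - i) (by omega) h1
          rw [show i + (k - i) = k by omega] at h2
          exact ha h2) hab
        have := hr.bound hw
        linarith
      · rw [if_neg hQb]; exact harc a b hab
  · intro v hv
    have hQ : ¬ Q v := by
      rintro ⟨p, k, hp, hS, rfl⟩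
      exact H4 p k hp hS hv
    simp only [if_neg hQ]
    obtain ⟨p, k, hp, rfl, e⟩ := hex v
    have := H3 p k hp hv
    have := h0 (p k)
    linarith
  · intro v hv
    have hQ : Q v := ⟨fun _ => v, 0, IsP.zero v, hv, rfl⟩
    simp only [if_pos hQ]
    obtain ⟨p, k, hp, rfl, e⟩ := gex v
    have := H2 p k hp hv
    have := g0 (p 0)
    linarith

lemma path_perm {V : Type*} {R : V → V → Prop} {p : ℕ → V} {k : ℕ} (h : IsP R p k) :
    ∃ σ : Equiv.Perm V, (∀ j, j < k → σ (p j) = p (j + 1)) ∧ σ (p k) = p 0 ∧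
      ∀ v, (∀ j, j ≤ k → p j ≠ v) → σ v = v := by
  let l := (List.range (k + 1)).map p
  have hl : l.length = k + 1 := by simp [l]
  have hn : l.Nodup := by
    refine List.Nodup.map_on ?_ List.nodup_range
    intro i hi j hj hij
    simp only [List.mem_range] at hi hj
    exact h.1 i j (by omega) (by omega) hij
  have hg : ∀ i (hi : i < l.length), l[i] = p i := by intro i hi; simp [l]
  refine ⟨l.formPerm, ?_, ?_, ?_⟩
  · intro j hj
    have := List.formPerm_apply_lt_getElem l hn j (by omega)
    rwa [hg, hg] at this
  · have := List.formPerm_apply_getElem l hn k (by omega)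
    rw [hg, hg] at this
    simpa [hl] using this
  · intro v hv
    apply List.formPerm_apply_of_notMem
    simp only [l, List.mem_map, List.mem_range, not_exists, not_and]
    intro j hj
    exact hv j (by omega)

/-! ### Votes -/

def vA (I : PrefSys A B) (M : Finset (A × B)) (p : A × B) : ℤ :=
  if ∃ b', (p.1, b') ∈ M ∧ I.prefA p.1 p.2 b' then 1
  else if ∃ b', (p.1, b') ∈ M ∧ I.prefA p.1 b' p.2 then -1 else 0

def vB (I : PrefSys A B) (M : Finset (A × B)) (p : A × B) : ℤ :=
  if ∃ a', (a', p.2) ∈ M ∧ I.prefB p.2 p.1 a' then 1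
  else if ∃ a', (a', p.2) ∈ M ∧ I.prefB p.2 a' p.1 then -1 else 0

lemma M_uniqA {I : PrefSys A B} {M : Finset (A × B)} (h : IsMatching I M) {a : A} {b b' : B}
    (h1 : (a, b) ∈ M) (h2 : (a, b') ∈ M) : b = b' := by
  have := h.2.1 _ h1 _ h2 rfl
  simpa using this

lemma M_uniqB {I : PrefSys A B} {M : Finset (A × B)} (h : IsMatching I M) {a a' : A} {b : B}
    (h1 : (a, b) ∈ M) (h2 : (a', b) ∈ M) : a = a' := by
  have := h.2.2 _ h1 _ h2 rfl
  simpa using this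

lemma card_matchedA [Fintype A] {I : PrefSys A B} {M : Finset (A × B)} (h : IsMatching I M) :
    (Finset.univ.filter (fun a : A => matchedA M a)).card = M.card := by
  rw [← Finset.card_image_of_injOn (f := Prod.fst) (s := M)
    (fun p hp q hq e => h.2.1 p hp q hq e)]
  congr 1
  ext a
  rw [Finset.mem_filter]
  simp [matchedA]

lemma card_matchedB [Fintype B] {I : PrefSys A B} {M : Finset (A × B)} (h : IsMatching I M) :
    (Finset.univ.filter (fun a : B => matchedB M a)).card = M.card := by
  rw [← Finset.card_image_of_injOn (f := Prod.snd) (s := M)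
    (fun p hp q hq e => h.2.2 p hp q hq e)]
  congr 1
  ext a
  rw [Finset.mem_filter]
  simp [matchedB]

lemma sum_A [Fintype A] {I : PrefSys A B} (hI : I.IsValid) {M N : Finset (A × B)}
    (hM : IsMatching I M) (hN : IsMatching I N) (hc : N.card = M.card) :
    ∑ a : A, ((if prefersA I a N M then (1 : ℤ) else 0) - (if prefersA I a M N then 1 else 0))
      = ∑ p ∈ N, vA I M p := by
  have key : ∀ a : A, ((if prefersA I a N M then (1 : ℤ) else 0) -
      (if prefersA I a M N then 1 else 0)) = (∑ p ∈ N with p.1 = a, vA I M p) +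
      ((if matchedA N a then (1 : ℤ) else 0) - (if matchedA M a then 1 else 0)) := by
    intro a
    by_cases hNa : matchedA N a
    · obtain ⟨b, hb⟩ := hNa
      have hs : N.filter (fun p => p.1 = a) = {(a, b)} := by
        ext ⟨x, y⟩
        simp only [Finset.mem_filter, Finset.mem_singleton, Prod.mk.injEq]
        constructor
        · rintro ⟨h1, rfl⟩; exact ⟨rfl, M_uniqA hN h1 hb⟩
        · rintro ⟨rfl, rfl⟩; exact ⟨hb, rfl⟩
      rw [hs, Finset.sum_singleton]
      have hNa : matchedA N a := ⟨b, hb⟩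
      by_cases hMa : matchedA M a
      · obtain ⟨c, hcM⟩ := hMa
        have hMa : matchedA M a := ⟨c, hcM⟩
        have e1 : prefersA I a N M ↔ I.prefA a b c := by
          constructor
          · rintro ⟨b1, h1, h2 | ⟨b2, h2, h3⟩⟩
            · exact absurd hMa h2
            · rwa [M_uniqA hN hb h1, M_uniqA hM hcM h2]
          · intro h; exact ⟨b, hb, Or.inr ⟨c, hcM, h⟩⟩
        have e2 : prefersA I a M N ↔ I.prefA a c b := by
          constructor
          · rintro ⟨b1, h1, h2 | ⟨b2, h2, h3⟩⟩
            · exact absurd hNa h2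
            · rwa [M_uniqA hM hcM h1, M_uniqA hN hb h2]
          · intro h; exact ⟨c, hcM, Or.inr ⟨b, hb, h⟩⟩
        have e3 : (∃ b', (a, b') ∈ M ∧ I.prefA a b b') ↔ I.prefA a b c :=
          ⟨by rintro ⟨b', h1, h2⟩; rwa [M_uniqA hM hcM h1], fun h => ⟨c, hcM, h⟩⟩
        have e4 : (∃ b', (a, b') ∈ M ∧ I.prefA a b' b) ↔ I.prefA a c b :=
          ⟨by rintro ⟨b', h1, h2⟩; rwa [M_uniqA hM hcM h1], fun h => ⟨c, hcM, h⟩⟩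
        have hasym : ¬ (I.prefA a b c ∧ I.prefA a c b) := fun h =>
          hI.1 a b (hI.2.1 a _ _ _ h.1 h.2)
        simp only [vA, e1, e2, e3, e4, hMa, hNa, if_true]
        by_cases h1 : I.prefA a b c <;> by_cases h2 : I.prefA a c b <;> simp_all
      · have e1 : prefersA I a N M := ⟨b, hb, Or.inl hMa⟩
        have e2 : ¬ prefersA I a M N := fun ⟨c, h, _⟩ => hMa ⟨c, h⟩
        have e3 : ¬ (∃ b', (a, b') ∈ M ∧ I.prefA a b b') := fun ⟨c, h, _⟩ => hMa ⟨c, h⟩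
        have e4 : ¬ (∃ b', (a, b') ∈ M ∧ I.prefA a b' b) := fun ⟨c, h, _⟩ => hMa ⟨c, h⟩
        simp only [vA, e1, e2, e3, e4, hMa, hNa, if_true, if_false]
        simp
    · have hs : N.filter (fun p => p.1 = a) = ∅ := by
        ext ⟨x, y⟩
        simp only [Finset.mem_filter, Finset.notMem_empty, iff_false]
        rintro ⟨h1, rfl⟩
        exact hNa ⟨y, h1⟩
      rw [hs, Finset.sum_empty]
      have e1 : ¬ prefersA I a N M := fun ⟨c, h, _⟩ => hNa ⟨c, h⟩
      have e2 : prefersA I a M N ↔ matchedA M a :=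
        ⟨fun ⟨c, h, _⟩ => ⟨c, h⟩, fun ⟨c, h⟩ => ⟨c, h, Or.inl hNa⟩⟩
      simp only [e1, e2, hNa, if_false]
      simp
  have hf : ∑ a : A, ∑ p ∈ N with p.1 = a, vA I M p = ∑ p ∈ N, vA I M p := by
    convert Finset.sum_fiberwise N (fun p => p.1) (vA I M)
  rw [Finset.sum_congr rfl fun a' _ => key a', Finset.sum_add_distrib,
    hf, Finset.sum_sub_distrib, ← Finset.natCast_card_filter,
    ← Finset.natCast_card_filter, card_matchedA hM, card_matchedA hN, hc]
  simp

lemma sum_B [Fintype B] {I : PrefSys A B} (hI : I.IsValid) {M N : Finset (A × B)}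
    (hM : IsMatching I M) (hN : IsMatching I N) (hc : N.card = M.card) :
    ∑ a : B, ((if prefersB I a N M then (1 : ℤ) else 0) - (if prefersB I a M N then 1 else 0))
      = ∑ p ∈ N, vB I M p := by
  have key : ∀ a : B, ((if prefersB I a N M then (1 : ℤ) else 0) -
      (if prefersB I a M N then 1 else 0)) = (∑ p ∈ N with p.2 = a, vB I M p) +
      ((if matchedB N a then (1 : ℤ) else 0) - (if matchedB M a then 1 else 0)) := by
    intro a
    by_cases hNa : matchedB N a
    · obtain ⟨b, hb⟩ := hNa
      have hs : N.filter (fun p => p.2 = a) = {(b, a)} := by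
        ext ⟨x, y⟩
        simp only [Finset.mem_filter, Finset.mem_singleton, Prod.mk.injEq]
        constructor
        · rintro ⟨h1, rfl⟩; exact ⟨M_uniqB hN h1 hb, rfl⟩
        · rintro ⟨rfl, rfl⟩; exact ⟨hb, rfl⟩
      rw [hs, Finset.sum_singleton]
      have hNa : matchedB N a := ⟨b, hb⟩
      by_cases hMa : matchedB M a
      · obtain ⟨c, hcM⟩ := hMa
        have hMa : matchedB M a := ⟨c, hcM⟩
        have e1 : prefersB I a N M ↔ I.prefB a b c := by
          constructor
          · rintro ⟨b1, h1, h2 | ⟨b2, h2, h3⟩⟩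
            · exact absurd hMa h2
            · rwa [M_uniqB hN hb h1, M_uniqB hM hcM h2]
          · intro h; exact ⟨b, hb, Or.inr ⟨c, hcM, h⟩⟩
        have e2 : prefersB I a M N ↔ I.prefB a c b := by
          constructor
          · rintro ⟨b1, h1, h2 | ⟨b2, h2, h3⟩⟩
            · exact absurd hNa h2
            · rwa [M_uniqB hM hcM h1, M_uniqB hN hb h2]
          · intro h; exact ⟨c, hcM, Or.inr ⟨b, hb, h⟩⟩
        have e3 : (∃ b', (b', a) ∈ M ∧ I.prefB a b b') ↔ I.prefB a b c :=
          ⟨by rintro ⟨b', h1, h2⟩; rwa [M_uniqB hM hcM h1], fun h => ⟨c, hcM, h⟩⟩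
        have e4 : (∃ b', (b', a) ∈ M ∧ I.prefB a b' b) ↔ I.prefB a c b :=
          ⟨by rintro ⟨b', h1, h2⟩; rwa [M_uniqB hM hcM h1], fun h => ⟨c, hcM, h⟩⟩
        have hasym : ¬ (I.prefB a b c ∧ I.prefB a c b) := fun h =>
          hI.2.2.2.1 a b (hI.2.2.2.2.1 a _ _ _ h.1 h.2)
        simp only [vB, e1, e2, e3, e4, hMa, hNa, if_true]
        by_cases h1 : I.prefB a b c <;> by_cases h2 : I.prefB a c b <;> simp_all
      · have e1 : prefersB I a N M := ⟨b, hb, Or.inl hMa⟩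
        have e2 : ¬ prefersB I a M N := fun ⟨c, h, _⟩ => hMa ⟨c, h⟩
        have e3 : ¬ (∃ b', (b', a) ∈ M ∧ I.prefB a b b') := fun ⟨c, h, _⟩ => hMa ⟨c, h⟩
        have e4 : ¬ (∃ b', (b', a) ∈ M ∧ I.prefB a b' b) := fun ⟨c, h, _⟩ => hMa ⟨c, h⟩
        simp only [vB, e1, e2, e3, e4, hMa, hNa, if_true, if_false]
        simp
    · have hs : N.filter (fun p => p.2 = a) = ∅ := by
        ext ⟨x, y⟩
        simp only [Finset.mem_filter, Finset.notMem_empty, iff_false]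
        rintro ⟨h1, rfl⟩
        exact hNa ⟨x, h1⟩
      rw [hs, Finset.sum_empty]
      have e1 : ¬ prefersB I a N M := fun ⟨c, h, _⟩ => hNa ⟨c, h⟩
      have e2 : prefersB I a M N ↔ matchedB M a :=
        ⟨fun ⟨c, h, _⟩ => ⟨c, h⟩, fun ⟨c, h⟩ => ⟨c, h, Or.inl hNa⟩⟩
      simp only [e1, e2, hNa, if_false]
      simp
  have hf : ∑ a : B, ∑ p ∈ N with p.2 = a, vB I M p = ∑ p ∈ N, vB I M p := by
    convert Finset.sum_fiberwise N (fun p => p.2) (vB I M)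
  rw [Finset.sum_congr rfl fun a' _ => key a', Finset.sum_add_distrib,
    hf, Finset.sum_sub_distrib, ← Finset.natCast_card_filter,
    ← Finset.natCast_card_filter, card_matchedB hM, card_matchedB hN, hc]
  simp


lemma popular_sum [Fintype A] [Fintype B] {I : PrefSys A B} (hI : I.IsValid)
    {M N : Finset (A × B)} (hM : IsPopularMaxMatching I M) (hN : IsMatching I N)
    (hc : N.card = M.card) : ∑ p ∈ N, (vA I M p + vB I M p) ≤ 0 := by
  have h := hM.2 N ⟨hN, fun N' hN' => hc ▸ hM.1.2 N' hN'⟩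
  have h1 := sum_A hI hM.1.1 hN hc
  have h2 := sum_B hI hM.1.1 hN hc
  rw [Finset.sum_add_distrib, ← h1, ← h2]
  unfold Delta phi at h
  rw [Finset.natCast_card_filter, Finset.natCast_card_filter, Fintype.sum_sum_type,
    Fintype.sum_sum_type] at h
  change 0 ≤ ((∑ a : A, if prefersA I a M N then (1 : ℤ) else 0) +
      ∑ b : B, if prefersB I b M N then (1 : ℤ) else 0) -
    ((∑ a : A, if prefersA I a N M then (1 : ℤ) else 0) +
      ∑ b : B, if prefersB I b N M then (1 : ℤ) else 0) at h
  rw [Finset.sum_sub_distrib, Finset.sum_sub_distrib]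
  linarith

def arcR (I : PrefSys A B) (M : Finset (A × B)) (v v' : {p // p ∈ M}) : Prop :=
  I.E v.1.1 v'.1.2

lemma alt_matching {I : PrefSys A B} {M : Finset (A × B)} (hM : IsMatching I M)
    {p : ℕ → {p // p ∈ M}} {k : ℕ} (hp : IsP (arcR I M) p k) {x : A} {y : B}
    (hx : x = (p k).1.1 ∨ ¬ matchedA M x) (hy : y = (p 0).1.2 ∨ ¬ matchedB M y)
    (hE : I.E x y) :
    ∃ N : Finset (A × B), IsMatching I N ∧ N.card = M.card ∧
      (∀ f : A × B → ℤ, (∀ q ∈ M, f q = 0) → ∑ q ∈ N, f q =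
        ∑ i ∈ Finset.range k, f ((p i).1.1, (p (i + 1)).1.2) + f (x, y)) ∧
      (∀ u, matchedA N u → matchedA M u ∨ u = x) ∧
      (¬ matchedB M y → ¬ matchedB N (p 0).1.2) := by
  obtain ⟨σ, s1, s2, s3⟩ := path_perm hp
  have injA : ∀ v v' : {p // p ∈ M}, v.1.1 = v'.1.1 → v = v' := fun v v' h =>
    Subtype.ext (hM.2.1 _ v.2 _ v'.2 h)
  have injB : ∀ v v' : {p // p ∈ M}, v.1.2 = v'.1.2 → v = v' := fun v v' h =>
    Subtype.ext (hM.2.2 _ v.2 _ v'.2 h)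
  have mA : ∀ v : {p // p ∈ M}, matchedA M v.1.1 := fun v => ⟨v.1.2, v.2⟩
  have mB : ∀ v : {p // p ∈ M}, matchedB M v.1.2 := fun v => ⟨v.1.1, v.2⟩
  obtain ⟨F, F1, F2⟩ : ∃ F : {p // p ∈ M} → A × B, F (p k) = (x, y) ∧
      ∀ v, v ≠ p k → F v = (v.1.1, (σ v).1.2) :=
    ⟨fun v => if v = p k then (x, y) else (v.1.1, (σ v).1.2), by simp,
      fun v hv => by simp [hv]⟩
  have X1 : ∀ v, v ≠ p k → x ≠ v.1.1 := by
    rintro v hv rfl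
    rcases hx with h | h
    · exact hv (injA _ _ h)
    · exact h (mA v)
  have Y1 : ∀ v, v ≠ p k → y ≠ (σ v).1.2 := by
    rintro v hv rfl
    rcases hy with h | h
    · have := injB _ _ h
      rw [← s2] at this
      exact hv (σ.injective this)
    · exact h (mB _)
  have i1 : ∀ v v', (F v).1 = (F v').1 → v = v' := by
    intro v v' h
    by_cases h1 : v = p k <;> by_cases h2 : v' = p k
    · rw [h1, h2]
    · rw [h1, F1, F2 v' h2] at h; exact absurd h (X1 v' h2)
    · rw [h2, F1, F2 v h1] at h; exact absurd h.symm (X1 v h1)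
    · rw [F2 v h1, F2 v' h2] at h; exact injA _ _ h
  have i2 : ∀ v v', (F v).2 = (F v').2 → v = v' := by
    intro v v' h
    by_cases h1 : v = p k <;> by_cases h2 : v' = p k
    · rw [h1, h2]
    · rw [h1, F1, F2 v' h2] at h; exact absurd h (Y1 v' h2)
    · rw [h2, F1, F2 v h1] at h; exact absurd h.symm (Y1 v h1)
    · rw [F2 v h1, F2 v' h2] at h; exact σ.injective (injB _ _ h)
  have iF : Function.Injective F := fun v v' h => i1 v v' (by rw [h])
  have Fp : ∀ i, i < k → F (p i) = ((p i).1.1, (p (i + 1)).1.2) := by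
    intro i hi
    rw [F2 _ (fun h => by have := hp.1 i k hi.le le_rfl h; omega), s1 i hi]
  have Fn : ∀ v, (∀ j, j ≤ k → p j ≠ v) → F v = v.1 := by
    intro v hv
    rw [F2 v (fun h => hv k le_rfl h.symm), s3 v hv]
  refine ⟨Finset.univ.image F, ⟨?_, ?_, ?_⟩, ?_, ?_, ?_, ?_⟩
  · intro q hq
    obtain ⟨v, -, rfl⟩ := Finset.mem_image.1 hq
    by_cases hv : ∃ j ≤ k, p j = v
    · obtain ⟨j, hj, rfl⟩ := hv
      rcases hj.lt_or_eq with hj | rfl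
      · rw [Fp j hj]; exact hp.2 j hj
      · rw [F1]; exact hE
    · push Not at hv
      rw [Fn v hv]; exact hM.1 _ v.2
  · intro q hq q' hq' h
    obtain ⟨v, -, rfl⟩ := Finset.mem_image.1 hq
    obtain ⟨v', -, rfl⟩ := Finset.mem_image.1 hq'
    rw [i1 _ _ h]
  · intro q hq q' hq' h
    obtain ⟨v, -, rfl⟩ := Finset.mem_image.1 hq
    obtain ⟨v', -, rfl⟩ := Finset.mem_image.1 hq'
    rw [i2 _ _ h]
  · rw [Finset.card_image_of_injective _ iF, Finset.card_univ, Fintype.card_coe]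
  · intro f hf
    rw [Finset.sum_image (fun a _ b _ h => iF h)]
    rw [← Finset.sum_subset (Finset.subset_univ ((Finset.range (k + 1)).image p)) (by
      intro v _ hv
      rw [Fn v (fun j hj h => hv (Finset.mem_image.2 ⟨j, Finset.mem_range.2 (by omega), h⟩))]
      exact hf _ v.2)]
    rw [Finset.sum_image (by
      intro i hi j hj h
      have hi := Finset.mem_range.1 hi
      have hj := Finset.mem_range.1 hj
      exact hp.1 i j (by omega) (by omega) h), Finset.sum_range_succ, F1]
    congr 1
    exact Finset.sum_congr rfl fun i hi => by rw [Fp i (Finset.mem_range.1 hi)]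
  · rintro u ⟨b, hb⟩
    obtain ⟨v, -, h⟩ := Finset.mem_image.1 hb
    by_cases hv : v = p k
    · rw [hv, F1] at h
      exact Or.inr (congrArg Prod.fst h).symm
    · rw [F2 v hv] at h
      left
      rw [← show v.1.1 = u from congrArg Prod.fst h]
      exact mA v
  · rintro hy' ⟨a, ha⟩
    obtain ⟨v, -, h⟩ := Finset.mem_image.1 ha
    by_cases hv : v = p k
    · rw [hv, F1] at h
      exact hy' ((show y = _ from congrArg Prod.snd h) ▸ mB _)
    · rw [F2 v hv] at h
      have := injB _ _ (Prod.mk.inj h).2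
      rw [← s2] at this
      exact hv (σ.injective this)

lemma insert_matching {I : PrefSys A B} {N : Finset (A × B)} (hN : IsMatching I N) {a : A} {b : B}
    (hE : I.E a b) (ha : ¬ matchedA N a) (hb : ¬ matchedB N b) :
    ∃ N' : Finset (A × B), IsMatching I N' ∧ N'.card = N.card + 1 := by
  refine ⟨insert (a, b) N, ⟨?_, ?_, ?_⟩, Finset.card_insert_of_notMem fun h => ha ⟨b, h⟩⟩
  · intro p hp
    rcases Finset.mem_insert.1 hp with rfl | hp
    · exact hE
    · exact hN.1 p hp
  · intro p hp q hq h
    rcases Finset.mem_insert.1 hp with rfl | hp <;> rcases Finset.mem_insert.1 hq with rfl | hq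
    · rfl
    · exact absurd ⟨q.2, by rw [show a = q.1 from h]; exact hq⟩ ha
    · exact absurd ⟨p.2, by rw [← show p.1 = a from h]; exact hp⟩ ha
    · exact hN.2.1 p hp q hq h
  · intro p hp q hq h
    rcases Finset.mem_insert.1 hp with rfl | hp <;> rcases Finset.mem_insert.1 hq with rfl | hq
    · rfl
    · exact absurd ⟨q.1, by rw [show b = q.2 from h]; exact hq⟩ hb
    · exact absurd ⟨p.1, by rw [← show p.2 = b from h]; exact hp⟩ hb
    · exact hN.2.2 p hp q hq h

lemma vote_M {I : PrefSys A B} (hI : I.IsValid) {M : Finset (A × B)} (hM : IsMatching I M) :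
    ∀ q ∈ M, vA I M q + vB I M q = 0 := by
  rintro ⟨a, b⟩ hq
  have e1 : ¬ (∃ b', (a, b') ∈ M ∧ I.prefA a b b') := by
    rintro ⟨b', h1, h2⟩; rw [M_uniqA hM h1 hq] at h2; exact hI.1 _ _ h2
  have e2 : ¬ (∃ b', (a, b') ∈ M ∧ I.prefA a b' b) := by
    rintro ⟨b', h1, h2⟩; rw [M_uniqA hM h1 hq] at h2; exact hI.1 _ _ h2
  have e3 : ¬ (∃ b', (b', b) ∈ M ∧ I.prefB b a b') := by
    rintro ⟨b', h1, h2⟩; rw [M_uniqB hM h1 hq] at h2; exact hI.2.2.2.1 _ _ h2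
  have e4 : ¬ (∃ b', (b', b) ∈ M ∧ I.prefB b b' a) := by
    rintro ⟨b', h1, h2⟩; rw [M_uniqB hM h1 hq] at h2; exact hI.2.2.2.1 _ _ h2
  simp only [vA, vB, e1, e2, e3, e4, if_false]
  simp

lemma wt_eq {I : PrefSys A B} (hI : I.IsValid) {M : Finset (A × B)} (hM : IsMatching I M)
    {a : A} {b : B} (hE : I.E a b) (ha : matchedA M a) (hb : matchedB M b) :
    wt I M a b = vA I M (a, b) + vB I M (a, b) := by
  by_cases hab : (a, b) ∈ M
  · rw [vote_M hI hM _ hab]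
    have e1 : ¬ Blocks I M a b := fun h => h.2.1 hab
    have e2 : ¬ (∃ b', (a, b') ∈ M ∧ I.prefA a b' b) := by
      rintro ⟨b', h1, h2⟩; rw [M_uniqA hM h1 hab] at h2; exact hI.1 _ _ h2
    simp only [wt, e1, e2, false_and, if_false]
  · obtain ⟨c, hc⟩ := ha
    obtain ⟨d, hd⟩ := hb
    have hcb : c ≠ b := by rintro rfl; exact hab hc
    have hda : d ≠ a := by rintro rfl; exact hab hd
    have e1 : (∃ b', (a, b') ∈ M ∧ I.prefA a b b') ↔ I.prefA a b c :=
      ⟨by rintro ⟨b', h1, h2⟩; rwa [M_uniqA hM hc h1], fun h => ⟨c, hc, h⟩⟩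
    have e2 : (∃ b', (a, b') ∈ M ∧ I.prefA a b' b) ↔ I.prefA a c b :=
      ⟨by rintro ⟨b', h1, h2⟩; rwa [M_uniqA hM hc h1], fun h => ⟨c, hc, h⟩⟩
    have e3 : (∃ b', (b', b) ∈ M ∧ I.prefB b a b') ↔ I.prefB b a d :=
      ⟨by rintro ⟨b', h1, h2⟩; rwa [M_uniqB hM hd h1], fun h => ⟨d, hd, h⟩⟩
    have e4 : (∃ b', (b', b) ∈ M ∧ I.prefB b b' a) ↔ I.prefB b d a :=
      ⟨by rintro ⟨b', h1, h2⟩; rwa [M_uniqB hM hd h1], fun h => ⟨d, hd, h⟩⟩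
    have e5 : Blocks I M a b ↔ I.prefA a b c ∧ I.prefB b a d := by
      unfold Blocks
      rw [e1, e3]
      have h1 : matchedA M a := ⟨c, hc⟩
      have h2 : matchedB M b := ⟨d, hd⟩
      simp [hE, hab, h1, h2]
    have t1 := hI.2.2.1 a b c hE (hM.1 _ hc) hcb.symm
    have t2 := hI.2.2.2.2.2 b a d hE (hM.1 _ hd) hda.symm
    have n1 : ¬ (I.prefA a b c ∧ I.prefA a c b) := fun h =>
      hI.1 a b (hI.2.1 a _ _ _ h.1 h.2)
    have n2 : ¬ (I.prefB b a d ∧ I.prefB b d a) := fun h =>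
      hI.2.2.2.1 b a (hI.2.2.2.2.1 b _ _ _ h.1 h.2)
    simp only [wt, vA, vB, e1, e2, e3, e4, e5]
    by_cases h1 : I.prefA a b c <;> by_cases h2 : I.prefA a c b <;>
      by_cases h3 : I.prefB b a d <;> by_cases h4 : I.prefB b d a <;> simp_all

lemma wt_half (I : PrefSys A B) (M : Finset (A × B)) (a : A) (b : B) :
    2 * (wt I M a b / 2) = wt I M a b ∧ wt I M a b / 2 ≤ 1 := by
  unfold wt
  split_ifs <;> norm_num

lemma vA_zero {I : PrefSys A B} {M : Finset (A × B)} {a : A} {b : B} (h : ¬ matchedA M a) :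
    vA I M (a, b) = 0 := by
  have e1 : ¬ (∃ b', (a, b') ∈ M ∧ I.prefA a b b') := fun ⟨c, h1, _⟩ => h ⟨c, h1⟩
  have e2 : ¬ (∃ b', (a, b') ∈ M ∧ I.prefA a b' b) := fun ⟨c, h1, _⟩ => h ⟨c, h1⟩
  simp only [vA, e1, e2, if_false]

lemma vB_zero {I : PrefSys A B} {M : Finset (A × B)} {a : A} {b : B} (h : ¬ matchedB M b) :
    vB I M (a, b) = 0 := by
  have e1 : ¬ (∃ b', (b', b) ∈ M ∧ I.prefB b a b') := fun ⟨c, h1, _⟩ => h ⟨c, h1⟩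
  have e2 : ¬ (∃ b', (b', b) ∈ M ∧ I.prefB b b' a) := fun ⟨c, h1, _⟩ => h ⟨c, h1⟩
  simp only [vB, e1, e2, if_false]

lemma vA_ge (I : PrefSys A B) (M : Finset (A × B)) (q : A × B) : -1 ≤ vA I M q := by
  unfold vA; split_ifs <;> norm_num

lemma vB_ge (I : PrefSys A B) (M : Finset (A × B)) (q : A × B) : -1 ≤ vB I M q := by
  unfold vB; split_ifs <;> norm_num

def arcW (I : PrefSys A B) (M : Finset (A × B)) (v v' : {p // p ∈ M}) : ℤ :=
  wt I M v.1.1 v'.1.2 / 2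

lemma path_le [Fintype A] [Fintype B] {I : PrefSys A B} (hI : I.IsValid) {M : Finset (A × B)}
    (hM : IsPopularMaxMatching I M)
    {p : ℕ → {p // p ∈ M}} {k : ℕ} (hp : IsP (arcR I M) p k) {x : A} {y : B}
    (hx : x = (p k).1.1 ∨ ¬ matchedA M x) (hy : y = (p 0).1.2 ∨ ¬ matchedB M y)
    (hE : I.E x y) : 2 * PW (arcW I M) p k + (vA I M (x, y) + vB I M (x, y)) ≤ 0 := by
  obtain ⟨N, h1, h2, h3, -, -⟩ := alt_matching hM.1.1 hp hx hy hE
  have h4 := popular_sum hI hM h1 h2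
  rw [h3 (fun q => vA I M q + vB I M q) (vote_M hI hM.1.1)] at h4
  convert h4 using 2
  unfold PW
  rw [Finset.mul_sum]
  refine Finset.sum_congr rfl fun i hi => ?_
  have hi := Finset.mem_range.1 hi
  rw [← wt_eq hI hM.1.1 (hp.2 i hi) ⟨_, (p i).2⟩ ⟨_, (p (i + 1)).2⟩]
  exact (wt_half I M _ _).1

/-- Let `M` be a popular max-matching in `G`, `U` the set of nodes
unmatched in `M`, `A' = A ∖ U`, `B' = B ∖ U`, `n0 = |A'| = |B'|`, and `E'` the set of
edges with both endpoints matched in `M`. Then there is `α : A' ∪ B' → ℤ` with: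
(a) `α_a + α_b ≥ wt_M(a,b)` on `E'`; (b) `α_a + α_b = 0` on `M`;
(c) `α_a ∈ {0, −2, …, −2(n0−1)}` on `A'` and `α_b ∈ {0, 2, …, 2(n0−1)}` on `B'`;
(i) `α_a = 0` for `a ∈ Nbr(U_B)`; (ii) `α_b = 2(n0−1)` for `b ∈ Nbr(U_A)`. -/
theorem stmt13 {A B : Type*} [Fintype A] [Fintype B] [DecidableEq A] [DecidableEq B]
    (I : PrefSys A B) (hI : I.IsValid) (M : Finset (A × B))
    (hM : IsPopularMaxMatching I M) (n0 : ℕ)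
    (hA' : (Finset.univ.filter (fun a : A => matchedA M a)).card = n0)
    (hB' : (Finset.univ.filter (fun b : B => matchedB M b)).card = n0) :
    ∃ α : A ⊕ B → ℤ,
      (∀ a b, I.E a b → matchedA M a → matchedB M b →
          wt I M a b ≤ α (Sum.inl a) + α (Sum.inr b)) ∧
      (∀ a b, (a, b) ∈ M → α (Sum.inl a) + α (Sum.inr b) = 0) ∧
      (∀ a : A, matchedA M a → ∃ k : ℕ, k ≤ n0 - 1 ∧ α (Sum.inl a) = -(2 * (k : ℤ))) ∧
      (∀ b : B, matchedB M b → ∃ k : ℕ, k ≤ n0 - 1 ∧ α (Sum.inr b) = 2 * (k : ℤ)) ∧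
      (∀ a : A, (∃ b, I.E a b ∧ ¬ matchedB M b) → α (Sum.inl a) = 0) ∧
      (∀ b : B, (∃ a, I.E a b ∧ ¬ matchedA M a) →
          α (Sum.inr b) = 2 * ((n0 : ℤ) - 1)) := by
  have hMm := hM.1.1
  have hcV : Fintype.card {p // p ∈ M} = n0 := by
    rw [Fintype.card_coe, ← hA', card_matchedA hMm]
  obtain ⟨κ, k1, k2, k3, k4⟩ := pot (arcR I M) (arcW I M)
    (fun a b => (wt_half I M _ _).2)
    (fun v => ∃ a, I.E a v.1.2 ∧ ¬ matchedA M a)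
    (fun v => ∃ b, I.E v.1.1 b ∧ ¬ matchedB M b)
    (by
      intro p k hp hr
      have h := path_le hI hM hp (Or.inl rfl) (Or.inl rfl) hr
      rw [← wt_eq hI hMm hr ⟨_, (p k).2⟩ ⟨_, (p 0).2⟩] at h
      have h2 := (wt_half I M (p k).1.1 (p 0).1.2).1
      unfold arcW at *
      omega)
    (by
      rintro p k hp ⟨u, hu, hu'⟩
      have h := path_le hI hM hp (Or.inr hu') (Or.inl rfl) hu
      rw [vA_zero hu'] at h
      have := vB_ge I M (u, (p 0).1.2)
      omega)
    (by
      rintro p k hp ⟨y, hy, hy'⟩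
      have h := path_le hI hM hp (Or.inl rfl) (Or.inr hy') hy
      rw [vB_zero hy'] at h
      have := vA_ge I M ((p k).1.1, y)
      omega)
    (by
      rintro p k hp ⟨u, hu, hu'⟩ ⟨y, hy, hy'⟩
      obtain ⟨N, h1, h2, -, h4, h5⟩ := alt_matching hMm hp (Or.inl rfl) (Or.inr hy') hy
      obtain ⟨N', h6, h7⟩ := insert_matching h1 hu (by
        intro h
        rcases h4 u h with h | h
        · exact hu' h
        · exact hu' (h ▸ ⟨_, (p k).2⟩)) (h5 hy')
      have := hM.1.2 N' h6
      omega)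
  rw [hcV] at k1 k4
  obtain ⟨α, a1, a2, a3⟩ : ∃ α : A ⊕ B → ℤ,
      (∀ v : {p // p ∈ M}, α (Sum.inl v.1.1) = -(2 * κ v)) ∧
      (∀ v : {p // p ∈ M}, α (Sum.inr v.1.2) = 2 * κ v) ∧
      (∀ a, ¬ matchedA M a → α (Sum.inl a) = 0) := by
    refine ⟨Sum.elim (fun a => if h : ∃ v : {p // p ∈ M}, v.1.1 = a then -(2 * κ h.choose) else 0)
      (fun b => if h : ∃ v : {p // p ∈ M}, v.1.2 = b then 2 * κ h.choose else 0), ?_, ?_, ?_⟩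
    · intro v
      have h : ∃ v' : {p // p ∈ M}, v'.1.1 = v.1.1 := ⟨v, rfl⟩
      have e : h.choose = v := Subtype.ext (hMm.2.1 _ h.choose.2 _ v.2 h.choose_spec)
      simp only [Sum.elim_inl]
      rw [dif_pos h, e]
    · intro v
      have h : ∃ v' : {p // p ∈ M}, v'.1.2 = v.1.2 := ⟨v, rfl⟩
      have e : h.choose = v := Subtype.ext (hMm.2.2 _ h.choose.2 _ v.2 h.choose_spec)
      simp only [Sum.elim_inr]
      rw [dif_pos h, e]
    · intro a ha
      simp only [Sum.elim_inl]
      rw [dif_neg]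
      rintro ⟨v, rfl⟩
      exact ha ⟨_, v.2⟩
  refine ⟨α, ?_, ?_, ?_, ?_, ?_, ?_⟩
  · rintro a b hE ⟨c, hc⟩ ⟨d, hd⟩
    have h1 := a1 ⟨(a, c), hc⟩
    have h2 := a2 ⟨(d, b), hd⟩
    have h3 := k2 ⟨(a, c), hc⟩ ⟨(d, b), hd⟩ hE
    have h4 := (wt_half I M a b).1
    simp only [arcW] at h1 h2 h3
    omega
  · intro a b h
    have h1 := a1 ⟨(a, b), h⟩
    have h2 := a2 ⟨(a, b), h⟩
    simp only at h1 h2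
    omega
  · rintro a ⟨c, hc⟩
    have h1 := a1 ⟨(a, c), hc⟩
    have h2 := k1 ⟨(a, c), hc⟩
    simp only at h1
    exact ⟨(κ ⟨(a, c), hc⟩).toNat, by omega, by omega⟩
  · rintro b ⟨d, hd⟩
    have h1 := a2 ⟨(d, b), hd⟩
    have h2 := k1 ⟨(d, b), hd⟩
    simp only at h1
    exact ⟨(κ ⟨(d, b), hd⟩).toNat, by omega, by omega⟩
  · rintro a ⟨b, hE, hb⟩
    by_cases ha : matchedA M a
    · obtain ⟨c, hc⟩ := ha
      have h1 := a1 ⟨(a, c), hc⟩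
      have h2 := k3 ⟨(a, c), hc⟩ ⟨b, hE, hb⟩
      simp only at h1
      omega
    · exact a3 a ha
  · rintro b ⟨a, hE, ha⟩
    by_cases hb : matchedB M b
    · obtain ⟨d, hd⟩ := hb
      have h1 := a2 ⟨(d, b), hd⟩
      have h2 := k4 ⟨(d, b), hd⟩ ⟨a, hE, ha⟩
      simp only at h1
      omega
    · obtain ⟨N', h6, h7⟩ := insert_matching hMm hE ha hb
      have := hM.1.2 N' h6
      omega

end PopMax
end
end

section
/- Let M be a popular max-matching in G, let u be a node unmatched in M, and let v be a neighbor of u in G. Then v is matched in M and v prefers its partner M(v) to u. -/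
open Classical

noncomputable section

namespace PopMax

variable {A B : Type*}

theorem swap_exists {X : Type*} (M : Finset X) (p q : X) (hp : p ∈ M) (hq : q ∉ M) :
    ∃ N : Finset X, (∀ r, r ∈ N ↔ r = q ∨ (r ∈ M ∧ r ≠ p)) ∧ N.card = M.card := by
  refine ⟨insert q (M.erase p), ?_, ?_⟩
  · intro r
    simp only [Finset.mem_insert, Finset.mem_erase]
    tauto
  · rw [Finset.card_insert_of_notMem (by simp [hq]), Finset.card_erase_add_one hp]

theorem add_exists {X : Type*} (M : Finset X) (q : X) (hq : q ∉ M) :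
    ∃ N : Finset X, (∀ r, r ∈ N ↔ r = q ∨ r ∈ M) ∧ N.card = M.card + 1 :=
  ⟨insert q M, by simp, Finset.card_insert_of_notMem hq⟩

theorem delta_neg [Fintype A] [Fintype B] (I : PrefSys A B) (M N : Finset (A × B))
    (x y z : A ⊕ B) (hxy : x ≠ y) (hx : prefers I x N M) (hy : prefers I y N M)
    (hz : ∀ u, prefers I u M N → u = z) : ¬ 0 ≤ Delta I M N := by
  have h1 : phi I M N ≤ 1 := by
    unfold phi
    rw [Finset.card_le_one]
    intro u hu v hv
    rw [Finset.mem_filter] at hu hv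
    rw [hz u hu.2, hz v hv.2]
  have h2 : 1 < phi I N M := by
    unfold phi
    rw [Finset.one_lt_card]
    exact ⟨x, by simp [hx], y, by simp [hy], hxy⟩
  unfold Delta
  omega

theorem edge_blocked [Fintype A] [Fintype B] (I : PrefSys A B) (M : Finset (A × B))
    (hM : IsMaximumMatching I M) (a : A) (b : B) (hE : I.E a b) (ha : ¬ matchedA M a) :
    matchedB M b := by
  obtain ⟨⟨m1, m2, m3⟩, hmax⟩ := hM
  by_contra hb
  unfold matchedA at ha
  unfold matchedB at hb
  push Not at ha hb
  obtain ⟨N, hN, hc⟩ := add_exists M (a, b) (ha b)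
  have := hmax N ⟨?_, ?_, ?_⟩
  · omega
  · rintro ⟨p, q⟩ hp
    grind
  · rintro ⟨p, q⟩ hp ⟨r, s⟩ hr h
    grind
  · rintro ⟨p, q⟩ hp ⟨r, s⟩ hr h
    grind

theorem partA [Fintype A] [Fintype B] (I : PrefSys A B) (hI : I.IsValid)
    (M : Finset (A × B)) (hM : IsPopularMaxMatching I M) (a : A) (b : B) (hE : I.E a b)
    (ha : ¬ matchedA M a) : ∃ a', (a', b) ∈ M ∧ I.prefB b a' a := by
  obtain ⟨a', ha'⟩ := edge_blocked I M hM.1 a b hE ha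
  refine ⟨a', ha', ?_⟩
  obtain ⟨⟨⟨m1, m2, m3⟩, hmax⟩, hpop⟩ := hM
  obtain ⟨i1, t1, l1, i2, t2, l2⟩ := hI
  have hne : a' ≠ a := by
    rintro rfl
    exact ha ⟨b, ha'⟩
  rcases l2 b a' a (m1 _ ha') hE hne with h | h
  · exact h
  exfalso
  have ha2 : ∀ c, (a, c) ∉ M := fun c hc => ha ⟨c, hc⟩
  obtain ⟨N, hN, hc⟩ := swap_exists M (a', b) (a, b) ha' (ha2 b)
  have hNm : IsMatching I N := by
    refine ⟨?_, ?_, ?_⟩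
    · rintro ⟨p, q⟩ hp
      grind
    · rintro ⟨p, q⟩ hp ⟨r, s⟩ hr h
      grind
    · rintro ⟨p, q⟩ hp ⟨r, s⟩ hr h
      grind
  refine delta_neg I M N (Sum.inl a) (Sum.inr b) (Sum.inl a') (by simp) ?_ ?_ ?_
    (hpop N ⟨hNm, fun K hK => hc ▸ hmax K hK⟩)
  · exact ⟨b, (hN _).2 (Or.inl rfl), Or.inl ha⟩
  · exact ⟨a, (hN _).2 (Or.inl rfl), Or.inr ⟨a', ha', h⟩⟩
  · rintro (u | u) ⟨v, hv, hu⟩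
    · by_contra hne'
      have hua : u ≠ a' := fun h => hne' (by rw [h])
      have hvN : (u, v) ∈ N := (hN _).2 (Or.inr ⟨hv, by simp [hua]⟩)
      rcases hu with hu | ⟨w, hw, hp⟩
      · exact hu ⟨v, hvN⟩
      · have := hNm.2.1 _ hw _ hvN rfl
        simp only [Prod.mk.injEq, true_and] at this
        subst this
        exact i1 _ _ hp
    · exfalso
      by_cases hub : u = b
      · subst hub
        have hva : v = a' := by simpa using m3 _ hv _ ha' rfl
        subst hva
        have hin : (a, u) ∈ N := (hN _).2 (Or.inl rfl)
        rcases hu with hu | ⟨w, hw, hp⟩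
        · exact hu ⟨a, hin⟩
        · have hwa : w = a := by simpa using hNm.2.2 _ hw _ hin rfl
          subst hwa
          exact i2 _ _ (t2 _ _ _ _ h hp)
      · have hvN : (v, u) ∈ N := (hN _).2 (Or.inr ⟨hv, by simp [hub]⟩)
        rcases hu with hu | ⟨w, hw, hp⟩
        · exact hu ⟨v, hvN⟩
        · have hwv : w = v := by simpa using hNm.2.2 _ hw _ hvN rfl
          subst hwv
          exact i2 _ _ hp

theorem partB [Fintype A] [Fintype B] (I : PrefSys A B) (hI : I.IsValid)
    (M : Finset (A × B)) (hM : IsPopularMaxMatching I M) (a : A) (b : B) (hE : I.E a b)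
    (hb : ¬ matchedB M b) : ∃ b', (a, b') ∈ M ∧ I.prefA a b' b := by
  obtain ⟨b', hb'⟩ : matchedA M a := by
    by_contra hcon
    exact hb (edge_blocked I M hM.1 a b hE hcon)
  refine ⟨b', hb', ?_⟩
  obtain ⟨⟨⟨m1, m2, m3⟩, hmax⟩, hpop⟩ := hM
  obtain ⟨i1, t1, l1, i2, t2, l2⟩ := hI
  have hne : b' ≠ b := by
    rintro rfl
    exact hb ⟨a, hb'⟩
  rcases l1 a b' b (m1 _ hb') hE hne with h | h
  · exact h
  exfalso
  have hb2 : ∀ c, (c, b) ∉ M := fun c hc => hb ⟨c, hc⟩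
  obtain ⟨N, hN, hc⟩ := swap_exists M (a, b') (a, b) hb' (hb2 a)
  have hNm : IsMatching I N := by
    refine ⟨?_, ?_, ?_⟩
    · rintro ⟨p, q⟩ hp
      grind
    · rintro ⟨p, q⟩ hp ⟨r, s⟩ hr h
      grind
    · rintro ⟨p, q⟩ hp ⟨r, s⟩ hr h
      grind
  refine delta_neg I M N (Sum.inl a) (Sum.inr b) (Sum.inr b') (by simp) ?_ ?_ ?_
    (hpop N ⟨hNm, fun K hK => hc ▸ hmax K hK⟩)
  · exact ⟨b, (hN _).2 (Or.inl rfl), Or.inr ⟨b', hb', h⟩⟩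
  · exact ⟨a, (hN _).2 (Or.inl rfl), Or.inl hb⟩
  · rintro (u | u) ⟨v, hv, hu⟩
    · exfalso
      by_cases hua : u = a
      · subst hua
        have hvb : v = b' := by simpa using m2 _ hv _ hb' rfl
        subst hvb
        have hin : (u, b) ∈ N := (hN _).2 (Or.inl rfl)
        rcases hu with hu | ⟨w, hw, hp⟩
        · exact hu ⟨b, hin⟩
        · have hwb : w = b := by simpa using hNm.2.1 _ hw _ hin rfl
          subst hwb
          exact i1 _ _ (t1 _ _ _ _ h hp)
      · have hvN : (u, v) ∈ N := (hN _).2 (Or.inr ⟨hv, by simp [hua]⟩)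
        rcases hu with hu | ⟨w, hw, hp⟩
        · exact hu ⟨v, hvN⟩
        · have hwv : w = v := by simpa using hNm.2.1 _ hw _ hvN rfl
          subst hwv
          exact i1 _ _ hp
    · by_contra hne'
      have hub : u ≠ b' := fun h => hne' (by rw [h])
      have hvN : (v, u) ∈ N := (hN _).2 (Or.inr ⟨hv, by simp [hub]⟩)
      rcases hu with hu | ⟨w, hw, hp⟩
      · exact hu ⟨v, hvN⟩
      · have hwv : w = v := by simpa using hNm.2.2 _ hw _ hvN rfl
        subst hwv
        exact i2 _ _ hp

/-- If `M` is a popular max-matching, `u` is unmatched in `M` and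
`v` is a neighbor of `u`, then `v` is matched in `M` and prefers `M(v)` to `u`. -/
theorem stmt15 {A B : Type*} [Fintype A] [Fintype B] [DecidableEq A] [DecidableEq B]
    (I : PrefSys A B) (hI : I.IsValid) (M : Finset (A × B))
    (hM : IsPopularMaxMatching I M) :
    (∀ (a : A) (b : B), I.E a b → ¬ matchedA M a →
        ∃ a', (a', b) ∈ M ∧ I.prefB b a' a) ∧
    (∀ (a : A) (b : B), I.E a b → ¬ matchedB M b →
        ∃ b', (a, b') ∈ M ∧ I.prefA a b' b) := by
  exact ⟨fun a b hE ha => partA I hI M hM a b hE ha, fun a b hE hb => partB I hI M hM a b hE hb⟩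

end PopMax
end
end

section
/- Every finite bipartite graph G = (A ∪ B, E) in which every node has a strict preference order over its neighbors admits a popular max-matching, i.e., a maximum matching M with Δ(M,N) ≥ 0 for every maximum matching N in G. -/
open Classical

noncomputable section

namespace PopMax

variable {A B : Type*}

theorem aux_contracts {C : Type*} [Finite C] (P Q : C → C → Prop)
    (hPi : ∀ c, ¬ P c c) (hPt : ∀ c d e, P c d → P d e → P c e)
    (hQi : ∀ c, ¬ Q c c) (hQt : ∀ c d e, Q c d → Q d e → Q c e) :
    ∃ S : Set C, (∀ c ∈ S, ∀ d ∈ S, ¬ P c d) ∧ (∀ c ∈ S, ∀ d ∈ S, ¬ Q c d) ∧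
      ∀ c, c ∈ S ∨ (∃ d ∈ S, P d c) ∨ (∃ d ∈ S, Q d c) := by
  let F : Set C →o Set C :=
    ⟨fun X => {c | ¬ ∃ d, (¬ ∃ e ∈ X, P e d) ∧ Q d c}, by
      intro X Y hXY c hc
      simp only [Set.mem_setOf_eq] at hc ⊢
      rintro ⟨d, hd, hq⟩
      exact hc ⟨d, fun ⟨e, he, hp⟩ => hd ⟨e, hXY he, hp⟩, hq⟩⟩
  obtain ⟨X, hX⟩ : ∃ X, F X = X := ⟨F.lfp, F.map_lfp⟩
  have hXm : ∀ c, c ∈ X ↔ ¬ ∃ d, (¬ ∃ e ∈ X, P e d) ∧ Q d c := by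
    intro c
    conv_lhs => rw [← hX]
    rfl
  have wf : ∀ (R : C → C → Prop), (∀ c, ¬ R c c) → (∀ c d e, R c d → R d e → R c e) →
      ∀ (T : Set C), T.Nonempty → ∃ m ∈ T, ∀ x ∈ T, ¬ R x m := by
    intro R hi ht T hT
    haveI : IsTrans C R := ⟨ht⟩
    haveI : Std.Irrefl R := ⟨hi⟩
    exact (Finite.wellFounded_of_trans_of_irrefl R).has_min T hT
  refine ⟨{c | c ∈ X ∧ ¬ ∃ e ∈ X, P e c}, ?_, ?_, ?_⟩
  · rintro c ⟨hc, _⟩ d ⟨_, hd⟩ h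
    exact hd ⟨c, hc, h⟩
  · rintro c ⟨_, hc⟩ d ⟨hd, _⟩ h
    exact (hXm d).1 hd ⟨c, hc, h⟩
  · intro c
    by_cases hcX : c ∈ X
    · by_cases hcY : ∃ e ∈ X, P e c
      · right; left
        obtain ⟨m, ⟨hm, hmc⟩, hmin⟩ := wf P hPi hPt {e | e ∈ X ∧ P e c} hcY
        refine ⟨m, ⟨hm, ?_⟩, hmc⟩
        rintro ⟨e, he, hp⟩
        exact hmin e ⟨he, hPt _ _ _ hp hmc⟩ hp
      · exact Or.inl ⟨hcX, hcY⟩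
    · right; right
      have h := hcX
      rw [hXm, not_not] at h
      obtain ⟨m, ⟨hm, hmc⟩, hmin⟩ := wf Q hQi hQt {d | (¬ ∃ e ∈ X, P e d) ∧ Q d c} h
      refine ⟨m, ⟨?_, hm⟩, hmc⟩
      rw [hXm]
      rintro ⟨d, hd, hq⟩
      exact hmin d ⟨hd, hQt _ _ _ hq hmc⟩ hq

theorem aux_levels {A B : Type*} [Fintype A] [Fintype B]
    (I : PrefSys A B) (hI : I.IsValid) (L : ℕ) :
    ∃ S : A → B → ℕ → Prop,
      (∀ a b k, S a b k → I.E a b ∧ k ≤ L) ∧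
      (∀ a b k b' k', S a b k → S a b' k' → b = b' ∧ k = k') ∧
      (∀ a b k a' k', S a b k → S a' b k' → a = a' ∧ k = k') ∧
      (∀ a b k, I.E a b → k ≤ L → S a b k ∨
        (∃ b' k', S a b' k' ∧ (k' < k ∨ k' = k ∧ I.prefA a b' b)) ∨
        (∃ a' k', S a' b k' ∧ (k < k' ∨ k' = k ∧ I.prefB b a' a))) := by
  obtain ⟨iA, tA, cA, iB, tB, cB⟩ := hI
  let C := {c : A × B × Fin (L+1) // I.E c.1 c.2.1}
  let P : C → C → Prop := fun c d => c.1.1 = d.1.1 ∧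
    ((c.1.2.2 : ℕ) < d.1.2.2 ∨ (c.1.2.2 : ℕ) = d.1.2.2 ∧ I.prefA c.1.1 c.1.2.1 d.1.2.1)
  let Q : C → C → Prop := fun c d => c.1.2.1 = d.1.2.1 ∧
    ((d.1.2.2 : ℕ) < c.1.2.2 ∨ (c.1.2.2 : ℕ) = d.1.2.2 ∧ I.prefB c.1.2.1 c.1.1 d.1.1)
  obtain ⟨S, hP, hQ, hS⟩ := aux_contracts P Q
    (by
      rintro c ⟨-, h | ⟨-, h⟩⟩
      · omega
      · exact iA _ _ h)
    (by
      rintro ⟨⟨a, b, k⟩, h1⟩ ⟨⟨a2, b2, k2⟩, h2⟩ ⟨⟨a3, b3, k3⟩, h3⟩ ⟨h4, h5⟩ ⟨h6, h7⟩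
      simp only at h4 h5 h6 h7
      subst h4 h6
      refine ⟨rfl, ?_⟩
      simp only
      rcases h5 with h5 | ⟨h5, h5'⟩ <;> rcases h7 with h7 | ⟨h7, h7'⟩
      · left; omega
      · left; omega
      · left; omega
      · right; exact ⟨by omega, tA _ _ _ _ h5' h7'⟩)
    (by
      rintro c ⟨-, h | ⟨-, h⟩⟩
      · omega
      · exact iB _ _ h)
    (by
      rintro ⟨⟨a, b, k⟩, h1⟩ ⟨⟨a2, b2, k2⟩, h2⟩ ⟨⟨a3, b3, k3⟩, h3⟩ ⟨h4, h5⟩ ⟨h6, h7⟩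
      simp only at h4 h5 h6 h7
      subst h4 h6
      refine ⟨rfl, ?_⟩
      simp only
      rcases h5 with h5 | ⟨h5, h5'⟩ <;> rcases h7 with h7 | ⟨h7, h7'⟩
      · left; omega
      · left; omega
      · left; omega
      · right; exact ⟨by omega, tB _ _ _ _ h5' h7'⟩)
  refine ⟨fun a b k => ∃ (hk : k < L + 1) (hE : I.E a b), (⟨(a, b, ⟨k, hk⟩), hE⟩ : C) ∈ S,
    ?_, ?_, ?_, ?_⟩
  · rintro a b k ⟨hk, hE, -⟩
    exact ⟨hE, by omega⟩
  · rintro a b k b' k' ⟨hk, hE, hs⟩ ⟨hk', hE', hs'⟩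
    have h1 := hP _ hs _ hs'
    have h2 := hP _ hs' _ hs
    simp only [P, true_and, not_or, not_and] at h1 h2
    have hkk : k = k' := by omega
    refine ⟨?_, hkk⟩
    by_contra hb
    rcases cA a b b' hE hE' hb with h | h
    · exact h1.2 hkk h
    · exact h2.2 hkk.symm h
  · rintro a b k a' k' ⟨hk, hE, hs⟩ ⟨hk', hE', hs'⟩
    have h1 := hQ _ hs _ hs'
    have h2 := hQ _ hs' _ hs
    simp only [Q, true_and, not_or, not_and] at h1 h2
    have hkk : k = k' := by omega
    refine ⟨?_, hkk⟩
    by_contra hb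
    rcases cB b a a' hE hE' hb with h | h
    · exact h1.2 hkk h
    · exact h2.2 hkk.symm h
  · intro a b k hE hk
    have hk1 : k < L + 1 := by omega
    rcases hS ⟨(a, b, ⟨k, hk1⟩), hE⟩ with h | ⟨⟨⟨a', b', ⟨k', hk'⟩⟩, hE'⟩, hs, h1, h2⟩ |
      ⟨⟨⟨a', b', ⟨k', hk'⟩⟩, hE'⟩, hs, h1, h2⟩
    · exact Or.inl ⟨hk1, hE, h⟩
    · simp only at h1 h2
      subst h1
      exact Or.inr (Or.inl ⟨b', k', ⟨hk', hE', hs⟩, h2⟩)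
    · simp only at h1 h2
      subst h1
      exact Or.inr (Or.inr ⟨a', k', ⟨hk', hE', hs⟩, h2⟩)

theorem aux_sum {X Y : Type*} [Fintype X] (N : Finset Y) (g : Y → X)
    (hg : ∀ p ∈ N, ∀ q ∈ N, g p = g q → p = q) (f : X → ℤ)
    (hf : ∀ x, (∀ p ∈ N, g p ≠ x) → f x ≤ 0) :
    ∑ x, f x ≤ ∑ p ∈ N, f (g p) := by
  rw [← Finset.sum_image (f := f) (g := g) (s := N) (fun p hp q hq h => hg p hp q hq h)]
  rw [← Finset.sum_sdiff (Finset.subset_univ (N.image g))]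
  have : ∑ x ∈ Finset.univ \ N.image g, f x ≤ 0 := by
    apply Finset.sum_nonpos
    intro x hx
    apply hf
    intro p hp h
    simp only [Finset.mem_sdiff, Finset.mem_image, not_exists, not_and] at hx
    exact hx.2 p hp h
  linarith

theorem aux_sum' {X Y : Type*} [Fintype X] (N : Finset Y) (g : Y → X)
    (hg : ∀ p ∈ N, ∀ q ∈ N, g p = g q → p = q) (f : X → ℤ)
    (hf : ∀ x, 0 ≤ f x) :
    ∑ p ∈ N, f (g p) ≤ ∑ x, f x := by
  have := aux_sum N g hg (fun x => - f x) (fun x _ => by have := hf x; simp; omega)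
  simp only [Finset.sum_neg_distrib] at this
  linarith

/-- votes -/
def vtA (I : PrefSys A B) (M N : Finset (A × B)) (a : A) : ℤ :=
  (if prefersA I a N M then 1 else 0) - (if prefersA I a M N then 1 else 0)

def vtB (I : PrefSys A B) (M N : Finset (A × B)) (b : B) : ℤ :=
  (if prefersB I b N M then 1 else 0) - (if prefersB I b M N then 1 else 0)

theorem phi_eq [Fintype A] [Fintype B] (I : PrefSys A B) (M N : Finset (A × B)) :
    (phi I M N : ℤ) = ∑ a : A, (if prefersA I a M N then (1:ℤ) else 0) +
      ∑ b : B, (if prefersB I b M N then (1:ℤ) else 0) := by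
  unfold phi
  rw [Finset.card_filter]
  push_cast
  rw [Fintype.sum_sum_type]
  rfl

theorem Delta_eq [Fintype A] [Fintype B] (I : PrefSys A B) (M N : Finset (A × B)) :
    Delta I M N = - (∑ a : A, vtA I M N a + ∑ b : B, vtB I M N b) := by
  unfold Delta vtA vtB
  rw [phi_eq, phi_eq, Finset.sum_sub_distrib, Finset.sum_sub_distrib]
  ring

theorem vtA_ge (I : PrefSys A B) (M N : Finset (A × B)) (a : A) : -1 ≤ vtA I M N a := by
  unfold vtA; split_ifs <;> norm_num
theorem vtB_ge (I : PrefSys A B) (M N : Finset (A × B)) (a : B) : -1 ≤ vtB I M N a := by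
  unfold vtB; split_ifs <;> norm_num
theorem vtA_le (I : PrefSys A B) (M N : Finset (A × B)) (a : A) : vtA I M N a ≤ 1 := by
  unfold vtA; split_ifs <;> norm_num
theorem vtB_le (I : PrefSys A B) (M N : Finset (A × B)) (a : B) : vtB I M N a ≤ 1 := by
  unfold vtB; split_ifs <;> norm_num

theorem vtA_unm (I : PrefSys A B) (M N : Finset (A × B)) (a : A)
    (h : ∀ p ∈ N, p.1 ≠ a) : vtA I M N a ≤ 0 := by
  unfold vtA
  have : ¬ prefersA I a N M := by
    rintro ⟨b, hb, -⟩
    exact h _ hb rfl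
  rw [if_neg this]
  split_ifs <;> norm_num

theorem vtB_unm (I : PrefSys A B) (M N : Finset (A × B)) (b : B)
    (h : ∀ p ∈ N, p.2 ≠ b) : vtB I M N b ≤ 0 := by
  unfold vtB
  have : ¬ prefersB I b N M := by
    rintro ⟨a, hb, -⟩
    exact h _ hb rfl
  rw [if_neg this]
  split_ifs <;> norm_num

theorem vtA_neg (I : PrefSys A B) (hI : I.IsValid) (M N : Finset (A × B))
    (hM : IsMatching I M) (hN : IsMatching I N) (a : A) (b b' : B)
    (h : (a, b) ∈ N) (h' : (a, b') ∈ M) (hp : I.prefA a b' b) : vtA I M N a = -1 := by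
  obtain ⟨iA, tA, cA, iB, tB, cB⟩ := hI
  have h1 : prefersA I a M N := ⟨b', h', Or.inr ⟨b, h, hp⟩⟩
  have h2 : ¬ prefersA I a N M := by
    rintro ⟨c, hc, h3 | ⟨d, hd, h3⟩⟩
    · exact h3 ⟨_, h'⟩
    · have e1 := congrArg Prod.snd (hN.2.1 _ hc _ h rfl)
      have e2 := congrArg Prod.snd (hM.2.1 _ hd _ h' rfl)
      simp only at e1 e2
      subst e1 e2
      exact iA _ _ (tA _ _ _ _ h3 hp)
  unfold vtA
  rw [if_pos h1, if_neg h2]; norm_num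

theorem vtB_neg (I : PrefSys A B) (hI : I.IsValid) (M N : Finset (A × B))
    (hM : IsMatching I M) (hN : IsMatching I N) (b : B) (a a' : A)
    (h : (a, b) ∈ N) (h' : (a', b) ∈ M) (hp : I.prefB b a' a) : vtB I M N b = -1 := by
  obtain ⟨iA, tA, cA, iB, tB, cB⟩ := hI
  have h1 : prefersB I b M N := ⟨a', h', Or.inr ⟨a, h, hp⟩⟩
  have h2 : ¬ prefersB I b N M := by
    rintro ⟨c, hc, h3 | ⟨d, hd, h3⟩⟩
    · exact h3 ⟨_, h'⟩
    · have e1 := congrArg Prod.fst (hN.2.2 _ hc _ h rfl)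
      have e2 := congrArg Prod.fst (hM.2.2 _ hd _ h' rfl)
      simp only at e1 e2
      subst e1 e2
      exact iB _ _ (tB _ _ _ _ h3 hp)
  unfold vtB
  rw [if_pos h1, if_neg h2]; norm_num

theorem vtA_same (I : PrefSys A B) (hI : I.IsValid) (M N : Finset (A × B))
    (hM : IsMatching I M) (hN : IsMatching I N) (a : A) (b : B)
    (h : (a, b) ∈ N) (h' : (a, b) ∈ M) : vtA I M N a ≤ 0 := by
  have h2 : ¬ prefersA I a N M := by
    rintro ⟨c, hc, h3 | ⟨d, hd, h3⟩⟩
    · exact h3 ⟨_, h'⟩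
    · have e1 := congrArg Prod.snd (hN.2.1 _ hc _ h rfl)
      have e2 := congrArg Prod.snd (hM.2.1 _ hd _ h' rfl)
      simp only at e1 e2
      subst e1 e2
      exact hI.1 _ _ h3
  unfold vtA
  rw [if_neg h2]; split_ifs <;> norm_num

theorem vtB_same (I : PrefSys A B) (hI : I.IsValid) (M N : Finset (A × B))
    (hM : IsMatching I M) (hN : IsMatching I N) (b : B) (a : A)
    (h : (a, b) ∈ N) (h' : (a, b) ∈ M) : vtB I M N b ≤ 0 := by
  have h2 : ¬ prefersB I b N M := by
    rintro ⟨c, hc, h3 | ⟨d, hd, h3⟩⟩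
    · exact h3 ⟨_, h'⟩
    · have e1 := congrArg Prod.fst (hN.2.2 _ hc _ h rfl)
      have e2 := congrArg Prod.fst (hM.2.2 _ hd _ h' rfl)
      simp only at e1 e2
      subst e1 e2
      exact hI.2.2.2.1 _ _ h3
  unfold vtB
  rw [if_neg h2]; split_ifs <;> norm_num

theorem aux_main {A B : Type*} [Fintype A] [Fintype B] (I : PrefSys A B) (hI : I.IsValid) :
    ∃ M : Finset (A × B), IsPopularMaxMatching I M := by
  obtain ⟨L, hL⟩ : ∃ L : ℕ, L = Fintype.card A + 1 := ⟨_, rfl⟩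
  obtain ⟨S, hSE, hSA, hSB, hst⟩ := aux_levels I hI L
  have exA : ∀ a, ∃ l : ℕ, (∀ b k, S a b k → l = k) ∧ ((∀ b k, ¬ S a b k) → l = L) := by
    intro a
    by_cases h : ∃ b k, S a b k
    · obtain ⟨b, k, h⟩ := h
      exact ⟨k, fun b' k' h' => (hSA _ _ _ _ _ h h').2, fun h' => absurd h (h' _ _)⟩
    · push Not at h
      exact ⟨L, fun b k h' => absurd h' (h _ _), fun _ => rfl⟩
  have exB : ∀ b, ∃ l : ℕ, (∀ a k, S a b k → l = k) ∧ ((∀ a k, ¬ S a b k) → l = 0) := by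
    intro b
    by_cases h : ∃ a k, S a b k
    · obtain ⟨a, k, h⟩ := h
      exact ⟨k, fun b' k' h' => (hSB _ _ _ _ _ h h').2, fun h' => absurd h (h' _ _)⟩
    · push Not at h
      exact ⟨0, fun b k h' => absurd h' (h _ _), fun _ => rfl⟩
  choose lA lA1 lA2 using exA
  choose lB lB1 lB2 using exB
  have lAle : ∀ a, lA a ≤ L := by
    intro a
    by_cases h : ∃ b k, S a b k
    · obtain ⟨b, k, h⟩ := h
      rw [lA1 _ _ _ h]; exact (hSE _ _ _ h).2
    · push Not at h
      rw [lA2 _ h]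
  have lBle : ∀ b, lB b ≤ L := by
    intro b
    by_cases h : ∃ a k, S a b k
    · obtain ⟨a, k, h⟩ := h
      rw [lB1 _ _ _ h]; exact (hSE _ _ _ h).2
    · push Not at h
      rw [lB2 _ h]; omega
  let M : Finset (A × B) := Finset.univ.filter (fun p => ∃ k, S p.1 p.2 k)
  have memM : ∀ a b, (a, b) ∈ M ↔ ∃ k, S a b k := by
    intro a b; simp [M]
  have hM : IsMatching I M := by
    refine ⟨?_, ?_, ?_⟩
    · rintro ⟨a, b⟩ h
      obtain ⟨k, h⟩ := (memM _ _).1 h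
      exact (hSE _ _ _ h).1
    · rintro ⟨a, b⟩ h ⟨a', b'⟩ h' e
      obtain ⟨k, h⟩ := (memM _ _).1 h
      obtain ⟨k', h'⟩ := (memM _ _).1 h'
      simp only at e
      subst e
      rw [(hSA _ _ _ _ _ h h').1]
    · rintro ⟨a, b⟩ h ⟨a', b'⟩ h' e
      obtain ⟨k, h⟩ := (memM _ _).1 h
      obtain ⟨k', h'⟩ := (memM _ _).1 h'
      simp only at e
      subst e
      rw [(hSB _ _ _ _ _ h h').1]
  have key : ∀ N, IsMatching I N → ∀ p ∈ N,
      vtA I M N p.1 + vtB I M N p.2 ≤ 2 * ((lB p.2 : ℤ) - lA p.1) := by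
    rintro N hN ⟨a, b⟩ hp
    simp only
    have hE : I.E a b := hN.1 _ hp
    by_cases hab : ∃ k, S a b k
    · obtain ⟨k, hk⟩ := hab
      have h1 := vtA_same I hI M N hM hN a b hp ((memM _ _).2 ⟨k, hk⟩)
      have h2 := vtB_same I hI M N hM hN b a hp ((memM _ _).2 ⟨k, hk⟩)
      rw [lA1 _ _ _ hk, lB1 _ _ _ hk]
      linarith
    have st : ∀ k ≤ L, (lA a < k ∨ lA a = k ∧ vtA I M N a = -1) ∨
        (k < lB b ∨ lB b = k ∧ vtB I M N b = -1) := by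
      intro k hk
      rcases hst a b k hE hk with h | ⟨b', k', h, h'⟩ | ⟨a', k', h, h'⟩
      · exact absurd ⟨k, h⟩ hab
      · left
        rw [lA1 _ _ _ h]
        rcases h' with h' | ⟨h', h''⟩
        · exact Or.inl h'
        · exact Or.inr ⟨h', vtA_neg I hI M N hM hN a b b' hp ((memM _ _).2 ⟨_, h⟩) h''⟩
      · right
        rw [lB1 _ _ _ h]
        rcases h' with h' | ⟨h', h''⟩
        · exact Or.inl h'
        · exact Or.inr ⟨h', vtB_neg I hI M N hM hN b a a' hp ((memM _ _).2 ⟨_, h⟩) h''⟩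
    have a1 := vtA_le I M N a
    have b1 := vtB_le I M N b
    have la := lAle a
    have lb := lBle b
    have s1 := st (lA a) la
    have s2 := st (lB b) lb
    have s3 := st (lA a - 1) (by omega)
    omega
  have bound : ∀ N, IsMatching I N → ∑ p ∈ N, (vtA I M N p.1 + vtB I M N p.2) ≤
      2 * ((L : ℤ) * M.card - L * N.card) := by
    intro N hN
    have h1 : ∑ p ∈ N, (lB p.2 : ℤ) ≤ ∑ b, (lB b : ℤ) :=
      aux_sum' N Prod.snd hN.2.2 (fun b => (lB b : ℤ)) (fun b => by positivity)
    have h2 : ∑ p ∈ N, ((L : ℤ) - lA p.1) ≤ ∑ a, ((L : ℤ) - lA a) :=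
      aux_sum' N Prod.fst hN.2.1 (fun a => (L : ℤ) - lA a) (fun a => by
        have := lAle a; omega)
    have h3 : ∑ b, (lB b : ℤ) ≤ ∑ p ∈ M, (lB p.2 : ℤ) := by
      refine aux_sum M Prod.snd hM.2.2 (fun b => (lB b : ℤ)) (fun b hb => ?_)
      have := lB2 b (fun a k h => hb _ ((memM a b).2 ⟨k, h⟩) rfl)
      omega
    have h4 : ∑ a, ((L : ℤ) - lA a) ≤ ∑ p ∈ M, ((L : ℤ) - lA p.1) := by
      refine aux_sum M Prod.fst hM.2.1 (fun a => (L : ℤ) - lA a) (fun a ha => ?_)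
      have := lA2 a (fun b k h => ha _ ((memM a b).2 ⟨k, h⟩) rfl)
      omega
    have h5 : ∑ p ∈ M, (lB p.2 : ℤ) = ∑ p ∈ M, (lA p.1 : ℤ) := by
      refine Finset.sum_congr rfl ?_
      rintro ⟨a, b⟩ h
      obtain ⟨k, hk⟩ := (memM _ _).1 h
      simp only
      rw [lA1 _ _ _ hk, lB1 _ _ _ hk]
    have h6 := Finset.sum_le_sum (key N hN)
    rw [← Finset.mul_sum, Finset.sum_sub_distrib] at h6
    rw [Finset.sum_sub_distrib] at h2 
    rw [Finset.sum_sub_distrib (s := M)] at h4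
    simp only [Finset.sum_const, nsmul_eq_mul] at h2 h4
    linarith
  refine ⟨M, ⟨hM, ?_⟩, ?_⟩
  · intro N hN
    by_contra hlt
    push Not at hlt
    have h1 := bound N hN
    have h2 : -2 * (N.card : ℤ) ≤ ∑ p ∈ N, (vtA I M N p.1 + vtB I M N p.2) := by
      have : ∑ p ∈ N, (-2 : ℤ) ≤ ∑ p ∈ N, (vtA I M N p.1 + vtB I M N p.2) :=
        Finset.sum_le_sum (fun p _ => by
          have := vtA_ge I M N p.1
          have := vtB_ge I M N p.2
          linarith)
      simp only [Finset.sum_const, nsmul_eq_mul] at this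
      linarith
    have h3 : N.card ≤ Fintype.card A := by
      rw [← Finset.card_univ]
      exact Finset.card_le_card_of_injOn Prod.fst (fun _ _ => by simp)
        (fun p hp q hq h => hN.2.1 p hp q hq h)
    have h4 : (M.card : ℤ) + 1 ≤ N.card := by exact_mod_cast hlt
    have h5 : (N.card : ℤ) + 1 ≤ L := by
      rw [hL]; push_cast; exact_mod_cast Nat.succ_le_succ h3
    nlinarith
  · rintro N ⟨hN, hNmax⟩
    have h1 := bound N hN
    have hc : (M.card : ℤ) ≤ N.card := by exact_mod_cast hNmax M hM
    have h2 := aux_sum N Prod.fst hN.2.1 (vtA I M N) (fun a h => vtA_unm I M N a h)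
    have h3 := aux_sum N Prod.snd hN.2.2 (vtB I M N) (fun a h => vtB_unm I M N a h)
    rw [Finset.sum_add_distrib] at h1
    rw [Delta_eq]
    have : (L : ℤ) * M.card ≤ L * N.card := mul_le_mul_of_nonneg_left hc (by positivity)
    linarith

/-- Every finite bipartite instance with strict preferences admits a
popular max-matching. -/
theorem stmt16 {A B : Type*} [Fintype A] [Fintype B] [DecidableEq A] [DecidableEq B]
    (I : PrefSys A B) (hI : I.IsValid) :
    ∃ M : Finset (A × B), IsPopularMaxMatching I M := by
  exact aux_main I hI

end PopMax
end
end

section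
/- Let M be a matching in G and let ρ be an alternating cycle with respect to M such that every edge of ρ not in M blocks M. Then every node on ρ prefers M ⊕ ρ to M and every node not on ρ is matched to the same partner in both matchings; hence φ(M ⊕ ρ, M) equals the number of nodes on ρ and φ(M, M ⊕ ρ) = 0. In particular, M is not Pareto-optimal. -/
open Classical

noncomputable section

namespace PopMax

variable {A B : Type*}

theorem edges_getElem_aux {V : Type*} {G : SimpleGraph V} {u w : V} (p : G.Walk u w) :
    ∀ (i : ℕ) (h : i < p.edges.length), p.edges[i] = s(p.getVert i, p.getVert (i + 1)) := by
  induction p with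
  | nil => intro i h; simp at h
  | cons hadj q ih =>
    intro i h
    cases i with
    | zero => simp
    | succ k =>
      simp only [SimpleGraph.Walk.edges_cons, List.getElem_cons_succ,
        SimpleGraph.Walk.getVert_cons_succ]
      exact ih k _

theorem key_aux (I : PrefSys A B) (M : Finset (A × B)) {v : A ⊕ B}
    (c : (graphOf I).Walk v v) (hc : IsAltCycle I M c) (u : A ⊕ B) (hu : u ∈ c.support) :
    ∃ x y, s(u, x) ∈ c.edges ∧ s(u, y) ∈ c.edges ∧ edgeInM M s(u, x) ∧ ¬ edgeInM M s(u, y) ∧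
      ∀ z, s(u, z) ∈ c.edges → z = x ∨ z = y := by
  obtain ⟨hcy, hch⟩ := hc
  have hlen : c.edges.length = c.length := c.length_edges
  have h3 := hcy.three_le_length
  have hN : ∀ z, s(u, z) ∈ c.edges ↔ z ∈ c.toSubgraph.neighborSet u := by
    intro z
    rw [← SimpleGraph.Walk.mem_edges_toSubgraph]; rfl
  have hch' := List.isChain_iff_getElem.mp hch
  suffices h : ∃ x y, c.toSubgraph.neighborSet u = {x, y} ∧ altRel M s(u, x) s(u, y) by
    obtain ⟨x, y, h1, h2⟩ := h
    simp only [hN, h1, altRel] at h2 ⊢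
    by_cases hx : edgeInM M s(u, x)
    · exact ⟨x, y, by simp, by simp, hx, h2.1 hx, by simp⟩
    · exact ⟨y, x, by simp, by simp, by tauto, hx, by simp [or_comm]⟩
  obtain ⟨i, hi, hil⟩ := SimpleGraph.Walk.mem_support_iff_exists_getVert.mp hu
  by_cases hi0 : i = 0 ∨ i = c.length
  · have huv : u = v := by
      rcases hi0 with h | h <;> subst h <;> simp at hi <;> exact hi.symm
    subst huv
    refine ⟨c.penultimate, c.snd, by rw [hcy.neighborSet_toSubgraph_endpoint, Set.pair_comm], ?_⟩
    have h := hch' (c.length - 1) (by simp; omega)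
    rw [List.getElem_append_left (by omega), List.getElem_append_right (by omega)] at h
    rw [List.getElem_take, edges_getElem_aux, edges_getElem_aux] at h
    have e1 : c.length - 1 + 1 = c.length := by omega
    have e2 : c.length - 1 + 1 - c.edges.length = 0 := by omega
    rw [e2, e1, c.getVert_length, c.getVert_zero, Sym2.eq_swap] at h
    exact h
  · push Not at hi0
    refine ⟨c.getVert (i - 1), c.getVert (i + 1), ?_, ?_⟩
    · rw [← hi]; exact hcy.neighborSet_toSubgraph_internal hi0.1 (by omega)
    · have h := hch' (i - 1) (by simp; omega)
      rw [List.getElem_append_left (by omega), List.getElem_append_left (by omega)] at h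
      rw [edges_getElem_aux, edges_getElem_aux] at h
      have e1 : i - 1 + 1 = i := by omega
      rw [e1, hi, Sym2.eq_swap] at h
      exact h

theorem edgeInM_iff (M : Finset (A × B)) (a : A) (b : B) :
    edgeInM M s(Sum.inl a, Sum.inr b) ↔ (a, b) ∈ M := by
  unfold edgeInM
  constructor
  · rintro ⟨a', b', h, e⟩
    simp at e
    rwa [e.1, e.2]
  · intro h; exact ⟨a, b, h, rfl⟩

theorem keyA (I : PrefSys A B) (M : Finset (A × B)) {v : A ⊕ B}
    (c : (graphOf I).Walk v v) (hc : IsAltCycle I M c) (a : A) (hu : Sum.inl a ∈ c.support) :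
    ∃ x y, s(Sum.inl a, Sum.inr x) ∈ c.edges ∧ s(Sum.inl a, Sum.inr y) ∈ c.edges ∧
      (a, x) ∈ M ∧ (a, y) ∉ M ∧
      ∀ z, s(Sum.inl a, Sum.inr z) ∈ c.edges → z = x ∨ z = y := by
  obtain ⟨x, y, h1, h2, h3, h4, h5⟩ := key_aux I M c hc _ hu
  have a1 := c.adj_of_mem_edges h1
  have a2 := c.adj_of_mem_edges h2
  rcases x with x | x
  · simp [graphOf] at a1
  rcases y with y | y
  · simp [graphOf] at a2
  rw [edgeInM_iff] at h3 h4
  exact ⟨x, y, h1, h2, h3, h4, fun z hz => by simpa using h5 _ hz⟩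

theorem keyB (I : PrefSys A B) (M : Finset (A × B)) {v : A ⊕ B}
    (c : (graphOf I).Walk v v) (hc : IsAltCycle I M c) (b : B) (hu : Sum.inr b ∈ c.support) :
    ∃ x y, s(Sum.inl x, Sum.inr b) ∈ c.edges ∧ s(Sum.inl y, Sum.inr b) ∈ c.edges ∧
      (x, b) ∈ M ∧ (y, b) ∉ M ∧
      ∀ z, s(Sum.inl z, Sum.inr b) ∈ c.edges → z = x ∨ z = y := by
  obtain ⟨x, y, h1, h2, h3, h4, h5⟩ := key_aux I M c hc _ hu
  have a1 := c.adj_of_mem_edges h1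
  have a2 := c.adj_of_mem_edges h2
  rcases x with x | x
  swap
  · simp [graphOf] at a1
  rcases y with y | y
  swap
  · simp [graphOf] at a2
  rw [Sym2.eq_swap] at h1 h2
  rw [Sym2.eq_swap, edgeInM_iff] at h3 h4
  exact ⟨x, y, h1, h2, h3, h4, fun z hz => by
    rw [Sym2.eq_swap] at hz
    simpa using h5 _ hz⟩

/-- Let `ρ` be an alternating cycle wrt a matching `M` such that every
edge of `ρ` not in `M` blocks `M`. Then every node on `ρ` prefers `M ⊕ ρ` to `M`, every
node not on `ρ` has the same partner in both matchings, `φ(M ⊕ ρ, M)` equals the number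
of nodes on `ρ`, `φ(M, M ⊕ ρ) = 0`, and `M` is not Pareto-optimal. -/
theorem stmt17 {A B : Type*} [Fintype A] [Fintype B] [DecidableEq A] [DecidableEq B]
    (I : PrefSys A B) (hI : I.IsValid) (M : Finset (A × B)) (hM : IsMatching I M)
    {v : A ⊕ B} (c : (graphOf I).Walk v v) (hc : IsAltCycle I M c)
    (hblock : ∀ (a : A) (b : B), s(Sum.inl a, Sum.inr b) ∈ c.edges → (a, b) ∉ M →
        Blocks I M a b) :
    (∀ u ∈ c.support, prefers I u (symmDiff M (pairsOf I c)) M) ∧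
    (∀ a : A, (Sum.inl a : A ⊕ B) ∉ c.support →
        ∀ b, ((a, b) ∈ symmDiff M (pairsOf I c) ↔ (a, b) ∈ M)) ∧
    (∀ b : B, (Sum.inr b : A ⊕ B) ∉ c.support →
        ∀ a, ((a, b) ∈ symmDiff M (pairsOf I c) ↔ (a, b) ∈ M)) ∧
    phi I (symmDiff M (pairsOf I c)) M =
      c.support.toFinset.card ∧
    phi I M (symmDiff M (pairsOf I c)) = 0 ∧
    ¬ IsParetoOptimal I M := by
  obtain ⟨iA, tA, -, iB, tB, -⟩ := hI
  obtain ⟨mE, mA, mB⟩ := id hM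
  have kA := keyA I M c hc
  have kB := keyB I M c hc
  have sA : ∀ a b, s(Sum.inl a, Sum.inr b) ∈ c.edges → Sum.inl a ∈ c.support :=
    fun a b h => c.fst_mem_support_of_mem_edges h
  have sB : ∀ a b, s(Sum.inl a, Sum.inr b) ∈ c.edges → Sum.inr b ∈ c.support :=
    fun a b h => c.snd_mem_support_of_mem_edges h
  have mA' : ∀ a b b', (a, b) ∈ M → (a, b') ∈ M → b = b' := fun a b b' h h' => by
    simpa using mA _ h _ h' rfl
  have mB' : ∀ a a' b, (a, b) ∈ M → (a', b) ∈ M → a = a' := fun a a' b h h' => by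
    simpa using mB _ h _ h' rfl
  set N := symmDiff M (pairsOf I c) with hNdef
  have hN : ∀ a b, (a, b) ∈ N ↔ ((a, b) ∈ M ∧ s(Sum.inl a, Sum.inr b) ∉ c.edges ∨
      s(Sum.inl a, Sum.inr b) ∈ c.edges ∧ (a, b) ∉ M) := by
    intro a b
    simp [hNdef, Finset.mem_symmDiff, pairsOf]
  clear_value N
  have nA : ∀ a b b', (a, b) ∈ N → (a, b') ∈ N → b = b' := by
    intro a b b' h h'
    rw [hN] at h h'
    by_cases ha : Sum.inl a ∈ c.support
    · obtain ⟨x, y, h1, h2, h3, h4, h5⟩ := kA a ha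
      grind
    · grind
  have nB : ∀ a a' b, (a, b) ∈ N → (a', b) ∈ N → a = a' := by
    intro a a' b h h'
    rw [hN] at h h'
    by_cases ha : Sum.inr b ∈ c.support
    · obtain ⟨x, y, h1, h2, h3, h4, h5⟩ := kB b ha
      grind
    · grind
  have c1 : ∀ u ∈ c.support, prefers I u N M := by
    rintro (a | b) hu
    · obtain ⟨x, y, h1, h2, h3, h4, h5⟩ := kA a hu
      exact ⟨y, (hN _ _).2 (Or.inr ⟨h2, h4⟩), (hblock a y h2 h4).2.2.1⟩
    · obtain ⟨x, y, h1, h2, h3, h4, h5⟩ := kB b hu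
      exact ⟨y, (hN _ _).2 (Or.inr ⟨h2, h4⟩), (hblock y b h2 h4).2.2.2⟩
  have c2 : ∀ a : A, (Sum.inl a : A ⊕ B) ∉ c.support → ∀ b, ((a, b) ∈ N ↔ (a, b) ∈ M) := by
    intro a ha b
    have := fun h => ha (sA a b h)
    rw [hN]; tauto
  have c3 : ∀ b : B, (Sum.inr b : A ⊕ B) ∉ c.support → ∀ a, ((a, b) ∈ N ↔ (a, b) ∈ M) := by
    intro b hb a
    have := fun h => hb (sB a b h)
    rw [hN]; tauto
  have c1' : ∀ u, prefers I u N M → u ∈ c.support := by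
    rintro (a | b) hu <;> by_contra hs
    · obtain ⟨b, hb, h | ⟨b', hb', h⟩⟩ := hu
      · exact h ⟨b, (c2 a hs b).1 hb⟩
      · have := mA' a b b' ((c2 a hs b).1 hb) hb'
        subst this; exact iA _ _ h
    · obtain ⟨a, ha, h | ⟨a', ha', h⟩⟩ := hu
      · exact h ⟨a, (c3 b hs a).1 ha⟩
      · have := mB' a a' b ((c3 b hs a).1 ha) ha'
        subst this; exact iB _ _ h
  have asym : ∀ u, prefers I u N M → ¬ prefers I u M N := by
    rintro (a | b)
    · rintro ⟨b, hb, h⟩ ⟨d, hd, h'⟩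
      rcases h with h | ⟨b', hb', h⟩
      · exact h ⟨d, hd⟩
      rcases h' with h' | ⟨d', hd', h'⟩
      · exact h' ⟨b, hb⟩
      have e1 := mA' _ _ _ hb' hd
      have e2 := nA _ _ _ hb hd'
      subst e1 e2
      exact iA _ _ (tA _ _ _ _ h h')
    · rintro ⟨b, hb, h⟩ ⟨d, hd, h'⟩
      rcases h with h | ⟨b', hb', h⟩
      · exact h ⟨d, hd⟩
      rcases h' with h' | ⟨d', hd', h'⟩
      · exact h' ⟨b, hb⟩
      have e1 := mB' _ _ _ hb' hd
      have e2 := nB _ _ _ hb hd'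
      subst e1 e2
      exact iB _ _ (tB _ _ _ _ h h')
  have c4 : phi I N M = c.support.toFinset.card := by
    unfold phi
    congr 1
    ext u
    simp only [Finset.mem_filter, Finset.mem_univ, true_and, List.mem_toFinset]
    exact ⟨c1' u, c1 u⟩
  have c5 : phi I M N = 0 := by
    unfold phi
    rw [Finset.card_eq_zero, Finset.filter_eq_empty_iff]
    intro u _ hu
    by_cases hs : u ∈ c.support
    · exact asym u (c1 u hs) hu
    · rcases u with a | b
      · obtain ⟨b, hb, h | ⟨b', hb', h⟩⟩ := hu
        · exact h ⟨b, (c2 a hs b).2 hb⟩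
        · have := mA' a b b' hb ((c2 a hs b').1 hb')
          subst this; exact iA _ _ h
      · obtain ⟨a, ha, h | ⟨a', ha', h⟩⟩ := hu
        · exact h ⟨a, (c3 b hs a).2 ha⟩
        · have := mB' a a' b ha ((c3 b hs a').1 ha')
          subst this; exact iB _ _ h
  refine ⟨c1, c2, c3, c4, c5, fun hP => hP ⟨N, ⟨?_, ?_, ?_⟩, ?_, c5⟩⟩
  · rintro ⟨a, b⟩ h
    rcases (hN a b).1 h with h | h
    · exact mE _ h.1
    · exact (hblock a b h.1 h.2).1
  · rintro ⟨a, b⟩ h ⟨a', b'⟩ h' e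
    simp only at e
    subst e
    rw [nA _ _ _ h h']
  · rintro ⟨a, b⟩ h ⟨a', b'⟩ h' e
    simp only at e
    subst e
    rw [nB _ _ _ h h']
  · rw [c4]
    exact Finset.card_pos.2 ⟨v, List.mem_toFinset.2 c.start_mem_support⟩

end PopMax
end
end
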